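/- There exist positive absolute constants C, C', c such that for every positive integer n, every β with 0 < β ≤ 1, and every l ∈ [n], one has P( Σ_{j ∈ H_l} (l - j) > C' β^{-2} ) ≤ C exp(-c β^{-1/16}). -/

import Mathlib

/-!
Every bound on the Mallows measure comes from an exchange argument: `σ ↦ σ * swap a d` exchanges two
values, changes the cost in two terms only, and is a bijection for fixed `a, d`, so comparing the
number of exchanges available before with the total relative weight of those arriving at a given
permutation compares the weights of two events.

* Crossings of a cut. Exchanging an upward with a downward crossing of a cut `c` removes both. With
  `m` crossings there are `m ^ 2` exchanges, and the weights read backwards sum to at most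
  `(3 / β) ^ 2`. Hence the number of crossings has a geometric tail beyond `6 / β`
  (`evWeight_up_tail`).

* Long jumps. If all cuts in a range carry at most `κ` crossings and `e` jumps above a window of `L`
  heights in that range, exchanging `σ e` with a value in the window lowers the jump of `e`, does not
  create crossings, and is reversed with total weight at most `κ + 3 / β`. So each window passed by
  each of `u` jumping positions costs a factor `(κ + 3 / β) / (L - u)` (`jump_step`,
  `jumpSet_tail`).

* Shells. Put `Y = ⌈1 / β⌉`. For `q ≥ 64`, apply this with `κ = q Y` and `q` windows of length
  `q ^ 2 Y`, below height `l`, starting at `l - q ^ 4 Y`. More than `Y / q ^ 6` positions making the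
  jump has probability at most `2 exp (-q / 4) exp (-θ / 4)`, where `θ = β ^ (-1 / 16)`
  (`shell_tail`). This is summable in `q`.

* Clocks. The sum of `l - k` over `k < l` with `E_k > (l - k) / 8` exceeds `80 / β ^ 2` with
  probability at most `exp (-1 / β)`, by an exponential moment bound (`clocks_tail`).

A position `k ∈ H_l` has `l - k ≤ 64 ^ 4 Y`, or a long clock, or lies in a shell with
`q ^ 4 Y < l - k ≤ 2 q ^ 4 Y` (`exists_shell`). Outside the exceptional events the shells contribute
at most `∑ q, 2 q ^ 4 Y * Y / q ^ 6 ≤ 2 Y ^ 2`, and all three parts are `O(β ^ (-2))`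
(`sum_Hset_le`).
-/

open scoped BigOperators Classical ENNReal
open MeasureTheory

/-- The (unnormalized) Mallows weight `exp(-β ∑ᵢ |σ(i) - i|)` for the `L¹` distance.
Permutations of `[n] = {1, …, n}` are modeled as permutations of `Fin n`. -/
noncomputable def mallowsWeight (n : ℕ) (β : ℝ) (σ : Equiv.Perm (Fin n)) : ℝ :=
  Real.exp (-β * ∑ i : Fin n, |((σ i : ℕ) : ℝ) - ((i : ℕ) : ℝ)|)

/-- The probability of `σ` under the Mallows permutation model `P_{n,β}`. -/
noncomputable def mallowsProb (n : ℕ) (β : ℝ) (σ : Equiv.Perm (Fin n)) : ℝ :=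
  mallowsWeight n β σ / ∑ τ : Equiv.Perm (Fin n), mallowsWeight n β τ

instance (n : ℕ) : MeasurableSpace (Equiv.Perm (Fin n)) := ⊤

/-- The Mallows model `P_{n,β}` as a measure on `S_n`. -/
noncomputable def mallowsMeasure (n : ℕ) (β : ℝ) : Measure (Equiv.Perm (Fin n)) :=
  ∑ σ : Equiv.Perm (Fin n),
    ENNReal.ofReal (mallowsProb n β σ) • MeasureTheory.Measure.dirac σ

/-- The probability space carrying `σ₀ ~ P_{n,β}` together with `n` i.i.d. exponential
random variables `E₁, …, E_n` of rate `2β`, independent of `σ₀`.  A sample point is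
`ω = (σ₀, (E_k)_{k ∈ [n]})`. -/
noncomputable def hitRunMeasure (n : ℕ) (β : ℝ) :
    Measure (Equiv.Perm (Fin n) × (Fin n → ℝ)) :=
  (mallowsMeasure n β).prod
    (Measure.pi fun _ : Fin n => ProbabilityTheory.expMeasure (2 * β))

/-- `b_k = max{k, σ₀(k)} + E_k` (so that, conditionally on `σ₀`,
`P(b_k ≥ x | σ₀) = exp(-2β (x - max{k, σ₀(k)})₊)`).  In `Fin n` coordinates all the
`b_k` and the thresholds `j` are shifted by one simultaneously. -/
noncomputable def bVal (n : ℕ) (ω : Equiv.Perm (Fin n) × (Fin n → ℝ)) (k : Fin n) : ℝ :=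
  max ((k : ℕ) : ℝ) ((ω.1 k : ℕ) : ℝ) + ω.2 k

/-- `H_j = {k ∈ [n] : k ≤ j - 1, b_k ≥ j}`. -/
noncomputable def Hset (n : ℕ) (ω : Equiv.Perm (Fin n) × (Fin n → ℝ)) (j : Fin n) :
    Finset (Fin n) :=
  Finset.univ.filter fun k => k < j ∧ ((j : ℕ) : ℝ) ≤ bVal n ω k

/-- `N_j = 1 + #{k ∈ [n] : k ≤ j - 1, b_k ≥ j}`. -/
noncomputable def Nval (n : ℕ) (ω : Equiv.Perm (Fin n) × (Fin n → ℝ)) (j : Fin n) : ℕ :=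
  1 + (Hset n ω j).card

/-! ### Costs, crossings and geometric sums -/

lemma mallowsWeight_pos (n : ℕ) (β : ℝ) (σ : Equiv.Perm (Fin n)) : 0 < mallowsWeight n β σ :=
  Real.exp_pos _

/-- `σ * swap a d` exchanges the values at `a` and `d`, so only two terms of the cost change. -/
lemma mallowsWeight_mul_swap (n : ℕ) (β : ℝ) (σ : Equiv.Perm (Fin n)) {a d : Fin n}
    (had : a ≠ d) :
    mallowsWeight n β (σ * Equiv.swap a d) = mallowsWeight n β σ *
      Real.exp (-β * (|((σ d : ℕ) : ℝ) - (a : ℕ)| + |((σ a : ℕ) : ℝ) - (d : ℕ)|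
        - |((σ a : ℕ) : ℝ) - (a : ℕ)| - |((σ d : ℕ) : ℝ) - (d : ℕ)|)) := by
  unfold mallowsWeight
  rw [← Real.exp_add]
  congr 1
  rw [← mul_add]
  congr 1
  have key : ∀ f : Fin n → ℝ, ∑ i, f i = f a + f d + ∑ i ∈ ({a, d} : Finset (Fin n))ᶜ, f i := by
    intro f
    rw [← Finset.sum_add_sum_compl ({a, d} : Finset (Fin n)) f, Finset.sum_pair had]
  rw [key, key (fun i => |((σ i : ℕ) : ℝ) - ((i : ℕ) : ℝ)|)]
  have hrest : ∑ i ∈ ({a, d} : Finset (Fin n))ᶜ,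
      |(((σ * Equiv.swap a d) i : ℕ) : ℝ) - ((i : ℕ) : ℝ)| =
      ∑ i ∈ ({a, d} : Finset (Fin n))ᶜ, |((σ i : ℕ) : ℝ) - ((i : ℕ) : ℝ)| := by
    refine Finset.sum_congr rfl fun i hi => ?_
    simp only [Finset.mem_compl, Finset.mem_insert, Finset.mem_singleton, not_or] at hi
    rw [Equiv.Perm.mul_apply, Equiv.swap_apply_of_ne_of_ne hi.1 hi.2]
  rw [hrest]
  simp only [Equiv.Perm.mul_apply, Equiv.swap_apply_left, Equiv.swap_apply_right]
  ring

/-- A sum of `exp (-a m)` over distinct naturals `m` is at most the full geometric series. -/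
lemma sum_exp_le {ι : Type*} (s : Finset ι) (f : ι → ℕ) (hf : Set.InjOn f s) {a : ℝ}
    (ha : 0 < a) : ∑ k ∈ s, Real.exp (-a * f k) ≤ 1 + 1 / a := by
  have h1 : ∑ k ∈ s, Real.exp (-a * f k) = ∑ m ∈ s.image f, Real.exp (-a) ^ m := by
    rw [Finset.sum_image hf]
    refine Finset.sum_congr rfl fun k _ => ?_
    rw [← Real.exp_nat_mul]; congr 1; ring
  have hlt : Real.exp (-a) < 1 := by rw [Real.exp_lt_one_iff]; linarith
  have h2 : ∑ m ∈ s.image f, Real.exp (-a) ^ m ≤ (1 - Real.exp (-a))⁻¹ := by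
    rw [← tsum_geometric_of_lt_one (Real.exp_pos _).le hlt]
    exact (summable_geometric_of_lt_one (Real.exp_pos _).le hlt).sum_le_tsum _
      (fun i _ => by positivity)
  have h3 : Real.exp (-a) ≤ 1 / (1 + a) := by
    rw [Real.exp_neg, ← one_div]
    exact one_div_le_one_div_of_le (by linarith) (by linarith [Real.add_one_le_exp a])
  have h4 : a / (1 + a) ≤ 1 - Real.exp (-a) := by
    have : a / (1 + a) = 1 - 1 / (1 + a) := by field_simp; ring
    linarith
  have h5 : (1 - Real.exp (-a))⁻¹ ≤ (a / (1 + a))⁻¹ := inv_anti₀ (by positivity) h4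
  have h6 : (a / (1 + a))⁻¹ = 1 + 1 / a := by field_simp; ring
  linarith

/-- For two integer coordinates `f`, `g`, each injective, at most two indices share a value of
`min f g`; hence the sum of `exp (-2 β min (f, g))` is of order `1 / β`. -/
lemma sum_exp_min_le {ι : Type*} (s : Finset ι) (f g : ι → ℕ) (hf : Set.InjOn f s)
    (hg : Set.InjOn g s) {β : ℝ} (hβ : 0 < β) (hβ1 : β ≤ 1) :
    ∑ k ∈ s, Real.exp (-(2 * β) * (min (f k) (g k) : ℕ)) ≤ 3 / β := by
  have h1 := sum_exp_le s f hf (a := 2 * β) (by linarith)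
  have h2 := sum_exp_le s g hg (a := 2 * β) (by linarith)
  have h3 : ∑ k ∈ s, Real.exp (-(2 * β) * (min (f k) (g k) : ℕ)) ≤
      ∑ k ∈ s, (Real.exp (-(2 * β) * f k) + Real.exp (-(2 * β) * g k)) := by
    refine Finset.sum_le_sum fun k _ => ?_
    rcases min_choice (f k) (g k) with h | h <;> rw [h]
    · linarith [Real.exp_pos (-(2 * β) * g k)]
    · linarith [Real.exp_pos (-(2 * β) * f k)]
  rw [Finset.sum_add_distrib] at h3
  have h4 : 1 / (2 * β) = (1 / β) / 2 := by field_simp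
  have h5 : 1 ≤ 1 / β := by rw [le_div_iff₀ hβ]; linarith
  have h6 : 3 / β = 3 * (1 / β) := by ring
  rw [h4] at h1 h2
  linarith

/-- The positions that jump upwards over the cut `c`: `k < c ≤ σ k`. -/
noncomputable def upSet (n : ℕ) (c : ℕ) (σ : Equiv.Perm (Fin n)) : Finset (Fin n) :=
  Finset.univ.filter fun k => (k : ℕ) < c ∧ c ≤ (σ k : ℕ)

/-- The positions that jump downwards over the cut `c`: `σ k < c ≤ k`. -/
noncomputable def downSet (n : ℕ) (c : ℕ) (σ : Equiv.Perm (Fin n)) : Finset (Fin n) :=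
  Finset.univ.filter fun k => c ≤ (k : ℕ) ∧ (σ k : ℕ) < c

lemma mem_upSet {n c : ℕ} {σ : Equiv.Perm (Fin n)} {k : Fin n} :
    k ∈ upSet n c σ ↔ (k : ℕ) < c ∧ c ≤ (σ k : ℕ) := by simp [upSet]

lemma mem_downSet {n c : ℕ} {σ : Equiv.Perm (Fin n)} {k : Fin n} :
    k ∈ downSet n c σ ↔ c ≤ (k : ℕ) ∧ (σ k : ℕ) < c := by simp [downSet]

lemma card_filter_perm {n : ℕ} (σ : Equiv.Perm (Fin n)) (P : Fin n → Prop)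
    [DecidablePred P] :
    (Finset.univ.filter fun k => P (σ k)).card = (Finset.univ.filter fun k => P k).card := by
  refine Finset.card_bij (fun k _ => σ k) ?_ ?_ ?_
  · intro a ha; simpa using ha
  · intro a _ b _ h; exact σ.injective h
  · intro b hb; exact ⟨σ.symm b, by simpa using hb, by simp⟩

lemma card_downSet (n c : ℕ) (σ : Equiv.Perm (Fin n)) :
    (downSet n c σ).card = (upSet n c σ).card := by
  have h := card_filter_perm σ (fun k => c ≤ (k : ℕ))
  have h1 : (Finset.univ.filter fun k => c ≤ (σ k : ℕ)) = upSet n c σ ∪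
      (Finset.univ.filter fun k : Fin n => c ≤ (k : ℕ) ∧ c ≤ (σ k : ℕ)) := by
    ext k; simp only [upSet, Finset.mem_filter, Finset.mem_univ, true_and, Finset.mem_union]; omega
  have h2 : (Finset.univ.filter fun k : Fin n => c ≤ (k : ℕ)) = downSet n c σ ∪
      (Finset.univ.filter fun k : Fin n => c ≤ (k : ℕ) ∧ c ≤ (σ k : ℕ)) := by
    ext k; simp only [downSet, Finset.mem_filter, Finset.mem_univ, true_and, Finset.mem_union]; omega
  rw [h1, h2, Finset.card_union_of_disjoint, Finset.card_union_of_disjoint] at h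
  · omega
  · rw [Finset.disjoint_left]; intro k hk; rw [mem_downSet] at hk; simp; omega
  · rw [Finset.disjoint_left]; intro k hk; rw [mem_upSet] at hk; simp; omega

/-- Undoing part of an upward jump, by exchanging the value `σ d` with a smaller value `σ p`
lying above `d`, does not increase the number of upward crossings of any cut. -/
lemma card_upSet_mul_swap_le {n : ℕ} (c : ℕ) (σ : Equiv.Perm (Fin n)) {d p : Fin n}
    (h1 : (d : ℕ) ≤ (σ p : ℕ)) (h2 : (σ p : ℕ) < (σ d : ℕ)) :
    (upSet n c (σ * Equiv.swap d p)).card ≤ (upSet n c σ).card := by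
  have hval : ∀ k, (k = d ∧ (σ * Equiv.swap d p) k = σ p) ∨
      (k = p ∧ (σ * Equiv.swap d p) k = σ d) ∨
      (k ≠ d ∧ k ≠ p ∧ (σ * Equiv.swap d p) k = σ k) := by
    intro k
    by_cases hd : k = d
    · left; subst hd; simp
    · by_cases hp : k = p
      · right; left; subst hp; simp
      · right; right
        exact ⟨hd, hp, by rw [Equiv.Perm.mul_apply, Equiv.swap_apply_of_ne_of_ne hd hp]⟩
  by_cases hc : (σ p : ℕ) < c ∧ c ≤ (σ d : ℕ)
  · have hd : d ∈ upSet n c σ := by rw [mem_upSet]; omega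
    have hsub : upSet n c (σ * Equiv.swap d p) ⊆ insert p ((upSet n c σ).erase d) := by
      intro k hk
      rw [mem_upSet] at hk
      rw [Finset.mem_insert, Finset.mem_erase, mem_upSet]
      rcases hval k with ⟨rfl, h⟩ | ⟨rfl, h⟩ | ⟨h3, h4, h⟩
      · rw [h] at hk; omega
      · left; rfl
      · right; rw [h] at hk; exact ⟨h3, hk⟩
    have := (Finset.card_le_card hsub).trans (Finset.card_insert_le _ _)
    rw [Finset.card_erase_of_mem hd] at this
    have := Finset.card_pos.mpr ⟨d, hd⟩
    omega
  · refine Finset.card_le_card fun k hk => ?_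
    rw [mem_upSet] at hk ⊢
    rcases hval k with ⟨rfl, h⟩ | ⟨rfl, h⟩ | ⟨h3, h4, h⟩ <;> rw [h] at hk <;> omega

/-- The total Mallows weight of the permutations satisfying `P`. -/
noncomputable def evWeight (n : ℕ) (β : ℝ) (P : Equiv.Perm (Fin n) → Prop) : ℝ :=
  ∑ σ : Equiv.Perm (Fin n), if P σ then mallowsWeight n β σ else 0

lemma evWeight_nonneg (n : ℕ) (β : ℝ) (P : Equiv.Perm (Fin n) → Prop) : 0 ≤ evWeight n β P :=
  Finset.sum_nonneg fun σ _ => by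
    split_ifs
    · exact (mallowsWeight_pos n β σ).le
    · exact le_rfl

lemma evWeight_mono {n : ℕ} {β : ℝ} {P Q : Equiv.Perm (Fin n) → Prop} (h : ∀ σ, P σ → Q σ) :
    evWeight n β P ≤ evWeight n β Q :=
  Finset.sum_le_sum fun σ _ => by
    have := (mallowsWeight_pos n β σ).le
    by_cases hP : P σ
    · simp [hP, h σ hP]
    · simp only [hP, if_false]; split_ifs <;> simp [this]

/-- Union bound over a finite index set. -/
lemma evWeight_exists_le {n : ℕ} {β : ℝ} {ι : Type*} (s : Finset ι)
    {P : Equiv.Perm (Fin n) → Prop} {Q : ι → Equiv.Perm (Fin n) → Prop}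
    (h : ∀ σ, P σ → ∃ i ∈ s, Q i σ) : evWeight n β P ≤ ∑ i ∈ s, evWeight n β (Q i) := by
  unfold evWeight
  rw [Finset.sum_comm]
  refine Finset.sum_le_sum fun σ _ => ?_
  have hw := (mallowsWeight_pos n β σ).le
  have hnn : ∀ i ∈ s, 0 ≤ (if Q i σ then mallowsWeight n β σ else 0) := fun i _ => by
    split_ifs <;> simp [hw]
  by_cases hP : P σ
  · obtain ⟨i, hi, hQ⟩ := h σ hP
    rw [if_pos hP]
    refine le_trans ?_ (Finset.single_le_sum hnn hi)
    rw [if_pos hQ]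
  · rw [if_neg hP]; exact Finset.sum_nonneg hnn

/-! ### Tail of the number of crossings of a cut -/

/-- Exchanging the values of an upward crossing `a` and a downward crossing `d` of the cut `c`
removes both crossings and lowers the cost by `2 min (c - a, c - σ' a) + 2 min (d - c, σ' d - c)`,
where `σ'` is the new permutation. A permutation with at least `m + 1` crossings allows
`(m + 1) ^ 2` such exchanges, while the preimages of a given `σ'` have total relative weight at
most `(3 / β) ^ 2`. -/
lemma evWeight_up_succ_le (n : ℕ) {β : ℝ} (hβ : 0 < β) (hβ1 : β ≤ 1) (c m : ℕ) :
    ((m : ℝ) + 1) ^ 2 * evWeight n β (fun σ => m + 1 ≤ (upSet n c σ).card) ≤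
      (3 / β) ^ 2 * evWeight n β (fun σ => m ≤ (upSet n c σ).card) := by
  let F : Fin n → Fin n → Equiv.Perm (Fin n) → ℝ := fun a d σ =>
    if m + 1 ≤ (upSet n c σ).card ∧ a ∈ upSet n c σ ∧ d ∈ downSet n c σ then
      mallowsWeight n β σ else 0
  let e₁ : Equiv.Perm (Fin n) → Fin n → ℝ := fun σ a =>
    if (a : ℕ) < c ∧ (σ a : ℕ) < c then
      Real.exp (-(2 * β) * (min (c - (a : ℕ)) (c - (σ a : ℕ)) : ℕ)) else 0
  let e₂ : Equiv.Perm (Fin n) → Fin n → ℝ := fun σ d =>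
    if c ≤ (d : ℕ) ∧ c ≤ (σ d : ℕ) then
      Real.exp (-(2 * β) * (min ((d : ℕ) - c) ((σ d : ℕ) - c) : ℕ)) else 0
  have he₁ : ∀ σ, ∑ a, e₁ σ a ≤ 3 / β := by
    intro σ
    simp only [e₁]
    rw [← Finset.sum_filter]
    refine sum_exp_min_le _ _ _ ?_ ?_ hβ hβ1
    · intro x hx y hy hxy
      simp only [Finset.coe_filter, Finset.mem_univ, true_and, Set.mem_ofPred_eq] at hx hy
      simp only at hxy
      exact Fin.ext (by omega)
    · intro x hx y hy hxy
      simp only [Finset.coe_filter, Finset.mem_univ, true_and, Set.mem_ofPred_eq] at hx hy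
      simp only at hxy
      exact σ.injective (Fin.ext (by omega))
  have he₂ : ∀ σ, ∑ d, e₂ σ d ≤ 3 / β := by
    intro σ
    simp only [e₂]
    rw [← Finset.sum_filter]
    refine sum_exp_min_le _ _ _ ?_ ?_ hβ hβ1
    · intro x hx y hy hxy
      simp only [Finset.coe_filter, Finset.mem_univ, true_and, Set.mem_ofPred_eq] at hx hy
      simp only at hxy
      exact Fin.ext (by omega)
    · intro x hx y hy hxy
      simp only [Finset.coe_filter, Finset.mem_univ, true_and, Set.mem_ofPred_eq] at hx hy
      simp only at hxy
      exact σ.injective (Fin.ext (by omega))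
  have he₁nn : ∀ σ a, 0 ≤ e₁ σ a := fun σ a => by
    simp only [e₁]; split_ifs <;> positivity
  have he₂nn : ∀ σ a, 0 ≤ e₂ σ a := fun σ a => by
    simp only [e₂]; split_ifs <;> positivity
  have hlow : ((m : ℝ) + 1) ^ 2 * evWeight n β (fun σ => m + 1 ≤ (upSet n c σ).card) ≤
      ∑ σ, ∑ a, ∑ d, F a d σ := by
    unfold evWeight
    rw [Finset.mul_sum]
    refine Finset.sum_le_sum fun σ _ => ?_
    have hw := (mallowsWeight_pos n β σ).le
    by_cases hm : m + 1 ≤ (upSet n c σ).card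
    · have hF : ∑ a, ∑ d, F a d σ =
          ((upSet n c σ).card : ℝ) * ((upSet n c σ).card * mallowsWeight n β σ) := by
        have : ∀ a, ∑ d, F a d σ = if a ∈ upSet n c σ then
            ((upSet n c σ).card : ℝ) * mallowsWeight n β σ else 0 := by
          intro a
          by_cases ha : a ∈ upSet n c σ
          · simp only [F, hm, ha, true_and, if_true]
            rw [← Finset.sum_filter, Finset.sum_const, nsmul_eq_mul, Finset.filter_mem_eq_inter,
              Finset.univ_inter, card_downSet]
          · simp [F, ha]
        simp only [this]
        rw [← Finset.sum_filter, Finset.sum_const, nsmul_eq_mul, Finset.filter_mem_eq_inter,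
              Finset.univ_inter]
      rw [hF, if_pos hm, ← mul_assoc, ← sq]
      have : (m : ℝ) + 1 ≤ (upSet n c σ).card := by exact_mod_cast hm
      gcongr
    · rw [if_neg hm, mul_zero]
      simp only [F, hm, false_and, if_false, Finset.sum_const_zero, le_refl]
  have hF : ∀ a d σ, F a d (σ * Equiv.swap a d) ≤
      (if m ≤ (upSet n c σ).card then mallowsWeight n β σ else 0) * (e₁ σ a * e₂ σ d) := by
    intro a d σ
    have hrhs : 0 ≤ (if m ≤ (upSet n c σ).card then mallowsWeight n β σ else 0) *
        (e₁ σ a * e₂ σ d) := by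
      have := (mallowsWeight_pos n β σ).le
      refine mul_nonneg ?_ (mul_nonneg (he₁nn _ _) (he₂nn _ _))
      split_ifs <;> simp [this]
    simp only [F]
    by_cases h : m + 1 ≤ (upSet n c (σ * Equiv.swap a d)).card ∧
      a ∈ upSet n c (σ * Equiv.swap a d) ∧ d ∈ downSet n c (σ * Equiv.swap a d)
    swap
    · rw [if_neg h]; exact hrhs
    rw [if_pos h]
    obtain ⟨hm, ha, hd⟩ := h
    have ha' := mem_upSet.mp ha
    have hd' := mem_downSet.mp hd
    simp only [Equiv.Perm.mul_apply, Equiv.swap_apply_left, Equiv.swap_apply_right] at ha' hd'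
    have had : a ≠ d := by rintro rfl; omega
    have hcard : m ≤ (upSet n c σ).card := by
      have hsub : (upSet n c (σ * Equiv.swap a d)).erase a ⊆ upSet n c σ := by
        intro k hk
        rw [Finset.mem_erase, mem_upSet] at hk
        have hkd : k ≠ d := by rintro rfl; omega
        rw [Equiv.Perm.mul_apply, Equiv.swap_apply_of_ne_of_ne hk.1 hkd] at hk
        exact mem_upSet.mpr hk.2
      have := Finset.card_le_card hsub
      rw [Finset.card_erase_of_mem ha] at this
      omega
    rw [if_pos hcard, mallowsWeight_mul_swap n β σ had]
    refine mul_le_mul_of_nonneg_left ?_ (mallowsWeight_pos n β σ).le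
    simp only [e₁, e₂]
    rw [if_pos ⟨ha'.1, hd'.2⟩, if_pos ⟨hd'.1, ha'.2⟩, ← Real.exp_add]
    refine Real.exp_le_exp.mpr (le_of_eq ?_)
    rw [← mul_add, neg_mul, neg_mul, mul_comm 2 β, mul_assoc]
    congr 2
    have h1 : (a : ℕ) < c := ha'.1
    have h2 : ((a : ℕ) : ℝ) < c := by exact_mod_cast ha'.1
    have h3 : (c : ℝ) ≤ (σ d : ℕ) := by exact_mod_cast ha'.2
    have h4 : (c : ℝ) ≤ (d : ℕ) := by exact_mod_cast hd'.1
    have h5 : ((σ a : ℕ) : ℝ) < c := by exact_mod_cast hd'.2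
    push_cast [Nat.cast_sub ha'.1.le, Nat.cast_sub hd'.2.le, Nat.cast_sub ha'.2,
      Nat.cast_sub hd'.1]
    rw [abs_of_nonneg (by linarith : (0 : ℝ) ≤ ((σ d : ℕ) : ℝ) - (a : ℕ)),
      abs_of_nonpos (by linarith : ((σ a : ℕ) : ℝ) - (d : ℕ) ≤ 0)]
    rcases le_total ((a : ℕ) : ℝ) ((σ a : ℕ) : ℝ) with h6 | h6 <;>
      rcases le_total ((d : ℕ) : ℝ) ((σ d : ℕ) : ℝ) with h7 | h7
    · rw [abs_of_nonneg (by linarith), abs_of_nonneg (by linarith), min_eq_right (by linarith),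
        min_eq_left (by linarith)]; ring
    · rw [abs_of_nonneg (by linarith), abs_of_nonpos (by linarith), min_eq_right (by linarith),
        min_eq_right (by linarith)]; ring
    · rw [abs_of_nonpos (by linarith), abs_of_nonneg (by linarith), min_eq_left (by linarith),
        min_eq_left (by linarith)]; ring
    · rw [abs_of_nonpos (by linarith), abs_of_nonpos (by linarith), min_eq_left (by linarith),
        min_eq_right (by linarith)]; ring
  have hswap : ∑ σ, ∑ a, ∑ d, F a d σ = ∑ σ, ∑ a, ∑ d, F a d (σ * Equiv.swap a d) := by
    have h1 : ∀ G : Fin n → Fin n → Equiv.Perm (Fin n) → ℝ,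
        ∑ σ, ∑ a, ∑ d, G a d σ = ∑ a, ∑ d, ∑ σ, G a d σ := by
      intro G
      rw [Finset.sum_comm]
      exact Finset.sum_congr rfl fun a _ => Finset.sum_comm
    rw [h1, h1 (fun a d σ => F a d (σ * Equiv.swap a d))]
    refine Finset.sum_congr rfl fun a _ => Finset.sum_congr rfl fun d _ => ?_
    exact (Equiv.sum_comp (Equiv.mulRight (Equiv.swap a d)) (F a d)).symm
  refine hlow.trans (hswap.le.trans ?_)
  unfold evWeight
  rw [Finset.mul_sum]
  refine Finset.sum_le_sum fun σ _ => ?_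
  have h1 : ∑ a, ∑ d, F a d (σ * Equiv.swap a d) ≤
      (if m ≤ (upSet n c σ).card then mallowsWeight n β σ else 0) *
        ((∑ a, e₁ σ a) * ∑ d, e₂ σ d) := by
    rw [Finset.sum_mul_sum, Finset.mul_sum]
    refine Finset.sum_le_sum fun a _ => ?_
    rw [Finset.mul_sum]
    exact Finset.sum_le_sum fun d _ => hF a d σ
  refine h1.trans ?_
  have hw := (mallowsWeight_pos n β σ).le
  have hw' : 0 ≤ if m ≤ (upSet n c σ).card then mallowsWeight n β σ else 0 := by
    split_ifs <;> simp [hw]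
  rw [mul_comm, sq]
  have h2 := mul_le_mul_of_nonneg_right
    (mul_le_mul (he₁ σ) (he₂ σ) (Finset.sum_nonneg fun d _ => he₂nn σ d) (by positivity)) hw'
  convert! h2

/-- The number of crossings of a cut reaches `6 Y + t` with probability at most `4 ^ (-t)`.
Here and below the integer `Y` plays the role of `⌈1 / β⌉`. -/
lemma evWeight_up_tail (n : ℕ) {β : ℝ} (hβ : 0 < β) (hβ1 : β ≤ 1) (c Y : ℕ) (hY : 1 / β ≤ Y)
    (t : ℕ) :
    evWeight n β (fun σ => 6 * Y + t ≤ (upSet n c σ).card) ≤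
      (1 / 4) ^ t * evWeight n β (fun _ => True) := by
  induction t with
  | zero => simpa using evWeight_mono (fun _ _ => trivial)
  | succ t ih =>
    have h := evWeight_up_succ_le n hβ hβ1 c (6 * Y + t)
    set A := evWeight n β (fun σ => 6 * Y + t + 1 ≤ (upSet n c σ).card) with hA
    set B := evWeight n β (fun σ => 6 * Y + t ≤ (upSet n c σ).card) with hB
    have hA0 : 0 ≤ A := evWeight_nonneg _ _ _
    have hB0 : 0 ≤ B := evWeight_nonneg _ _ _
    have hb : 0 < 3 / β := by positivity
    have h1 : 2 * (3 / β) ≤ ((6 * Y + t : ℕ) : ℝ) + 1 := by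
      have : 3 / β = 3 * (1 / β) := by ring
      push_cast
      have : (0 : ℝ) ≤ t := by positivity
      linarith
    have h2 : (2 * (3 / β)) ^ 2 * A ≤ (3 / β) ^ 2 * B :=
      le_trans (by gcongr) h
    have h3 : 4 * A ≤ B := by
      have : (3 / β) ^ 2 * (4 * A) ≤ (3 / β) ^ 2 * B := by linarith
      exact le_of_mul_le_mul_left this (by positivity)
    rw [pow_succ]
    change A ≤ _
    linarith

/-! ### Long upward jumps -/

/-- Every cut in `[h, H]` is crossed upwards at most `κ` times. -/
def GoodCuts (n h H κ : ℕ) (σ : Equiv.Perm (Fin n)) : Prop :=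
  ∀ c, h ≤ c → c ≤ H → (upSet n c σ).card ≤ κ

/-- All cuts are good, and every `d ∈ D` is sent to height at least `t d`. -/
def JumpEvent (n h H κ : ℕ) (D : Finset (Fin n)) (t : Fin n → ℕ) (σ : Equiv.Perm (Fin n)) : Prop :=
  GoodCuts n h H κ σ ∧ ∀ d ∈ D, t d ≤ (σ d : ℕ)

/-- The exchanges `(d, p)` with `σ p > σ d =: j` and `d ≤ j`, read backwards: those with `p ≤ j`
are upward crossings of the cut `j + 1`, the others cost `2 min (p - j, σ p - j)`. -/
lemma sum_exchange_le {n : ℕ} {β : ℝ} (hβ : 0 < β) (hβ1 : β ≤ 1) (κ : ℕ)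
    (σ : Equiv.Perm (Fin n)) (d : Fin n) (hd : (d : ℕ) ≤ (σ d : ℕ))
    (hup : (upSet n ((σ d : ℕ) + 1) σ).card ≤ κ) :
    ∑ p ∈ Finset.univ.filter (fun p => (σ d : ℕ) < (σ p : ℕ)),
      Real.exp (-β * (|((σ p : ℕ) : ℝ) - (d : ℕ)| + |((σ d : ℕ) : ℝ) - (p : ℕ)|
        - |((σ d : ℕ) : ℝ) - (d : ℕ)| - |((σ p : ℕ) : ℝ) - (p : ℕ)|)) ≤ κ + 3 / β := by
  have hd' : ((d : ℕ) : ℝ) ≤ (σ d : ℕ) := by exact_mod_cast hd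
  rw [← Finset.sum_filter_add_sum_filter_not _ (fun p : Fin n => (p : ℕ) ≤ (σ d : ℕ))]
  refine add_le_add ?_ ?_
  · have hle : ((Finset.univ.filter (fun p => (σ d : ℕ) < (σ p : ℕ))).filter
        (fun p : Fin n => (p : ℕ) ≤ (σ d : ℕ))).card ≤ κ := by
      refine le_trans (Finset.card_le_card fun p hp => ?_) hup
      simp only [Finset.mem_filter, Finset.mem_univ, true_and] at hp
      rw [mem_upSet]; omega
    refine le_trans (Finset.sum_le_card_nsmul _ _ 1 fun p hp => ?_) ?_
    · simp only [Finset.mem_filter, Finset.mem_univ, true_and] at hp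
      have h1 : ((σ d : ℕ) : ℝ) < (σ p : ℕ) := by exact_mod_cast hp.1
      have h2 : ((p : ℕ) : ℝ) ≤ (σ d : ℕ) := by exact_mod_cast hp.2
      rw [Real.exp_le_one_iff, abs_of_nonneg (by linarith), abs_of_nonneg (by linarith),
        abs_of_nonneg (by linarith), abs_of_nonneg (by linarith)]
      apply le_of_eq; ring
    · rw [nsmul_eq_mul, mul_one]; exact_mod_cast hle
  · refine le_trans (le_of_eq ?_) (sum_exp_min_le
      ((Finset.univ.filter (fun p => (σ d : ℕ) < (σ p : ℕ))).filter
        (fun p : Fin n => ¬ (p : ℕ) ≤ (σ d : ℕ))) (fun p : Fin n => (p : ℕ) - (σ d : ℕ))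
      (fun p : Fin n => (σ p : ℕ) - (σ d : ℕ)) ?_ ?_ hβ hβ1)
    · refine Finset.sum_congr rfl fun p hp => ?_
      simp only [Finset.mem_filter, Finset.mem_univ, true_and, not_le] at hp
      have h1 : ((σ d : ℕ) : ℝ) < (σ p : ℕ) := by exact_mod_cast hp.1
      have h2 : ((σ d : ℕ) : ℝ) < (p : ℕ) := by exact_mod_cast hp.2
      congr 1
      rw [neg_mul, neg_mul, mul_comm 2 β, mul_assoc]
      congr 2
      push_cast [Nat.cast_sub hp.1.le, Nat.cast_sub hp.2.le]
      rw [abs_of_nonneg (by linarith : (0 : ℝ) ≤ ((σ p : ℕ) : ℝ) - (d : ℕ)),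
        abs_of_nonpos (by linarith : ((σ d : ℕ) : ℝ) - (p : ℕ) ≤ 0),
        abs_of_nonneg (by linarith : (0 : ℝ) ≤ ((σ d : ℕ) : ℝ) - (d : ℕ))]
      rcases le_total ((p : ℕ) : ℝ) ((σ p : ℕ) : ℝ) with h6 | h6
      · rw [abs_of_nonneg (by linarith), min_eq_left (by linarith)]; ring
      · rw [abs_of_nonpos (by linarith), min_eq_right (by linarith)]; ring
    · intro x hx y hy hxy
      simp only [Finset.coe_filter, Finset.mem_filter, Finset.mem_univ, true_and,
        Set.mem_ofPred_eq] at hx hy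
      simp only at hxy
      exact Fin.ext (by omega)
    · intro x hx y hy hxy
      simp only [Finset.coe_filter, Finset.mem_filter, Finset.mem_univ, true_and,
        Set.mem_ofPred_eq] at hx hy
      simp only at hxy
      exact σ.injective (Fin.ext (by omega))

lemma card_window {n : ℕ} (σ : Equiv.Perm (Fin n)) (a L : ℕ) (h : a + L ≤ n) :
    (Finset.univ.filter fun p => a ≤ (σ p : ℕ) ∧ (σ p : ℕ) < a + L).card = L := by
  rw [card_filter_perm σ (fun k => a ≤ (k : ℕ) ∧ (k : ℕ) < a + L)]
  have : (Finset.univ.filter fun k : Fin n => a ≤ (k : ℕ) ∧ (k : ℕ) < a + L).map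
      Fin.valEmbedding = Finset.Ico a (a + L) := by
    ext x
    simp only [Finset.mem_map, Finset.mem_filter, Finset.mem_univ, true_and,
      Fin.valEmbedding_apply, Finset.mem_Ico]
    constructor
    · rintro ⟨k, hk, rfl⟩; exact hk
    · intro hx; exact ⟨⟨x, by omega⟩, hx, rfl⟩
  rw [← Finset.card_map Fin.valEmbedding, this]
  simp

/-- Raising the threshold of a single `e ∈ D` by `L` costs a factor `(κ + 3 / β) / (L - |D|)`: the
value `σ e` may be exchanged with at least `L - |D|` values in the window `[t e, t e + L)` without
disturbing the rest of `D`. -/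
lemma jump_step {n h H κ : ℕ} {β : ℝ} (hβ : 0 < β) (hβ1 : β ≤ 1) (D : Finset (Fin n))
    (t : Fin n → ℕ) (e : Fin n) (he : e ∈ D) (hte : (e : ℕ) < t e) (hh : h ≤ t e) (L : ℕ)
    (hH : t e + L ≤ H) :
    ((L : ℝ) - D.card) * evWeight n β
        (JumpEvent n h H κ D (Function.update t e (t e + L))) ≤
      (κ + 3 / β) * evWeight n β (JumpEvent n h H κ D t) := by
  let F : Fin n → Equiv.Perm (Fin n) → ℝ := fun p σ =>
    if JumpEvent n h H κ D (Function.update t e (t e + L)) σ ∧ p ∉ D ∧ t e ≤ (σ p : ℕ) ∧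
      (σ p : ℕ) < t e + L then mallowsWeight n β σ else 0
  let E : Equiv.Perm (Fin n) → Fin n → ℝ := fun σ p =>
    Real.exp (-β * (|((σ p : ℕ) : ℝ) - (e : ℕ)| + |((σ e : ℕ) : ℝ) - (p : ℕ)|
        - |((σ e : ℕ) : ℝ) - (e : ℕ)| - |((σ p : ℕ) : ℝ) - (p : ℕ)|))
  have hlow : ((L : ℝ) - D.card) * evWeight n β
        (JumpEvent n h H κ D (Function.update t e (t e + L))) ≤ ∑ σ, ∑ p, F p σ := by
    unfold evWeight
    rw [Finset.mul_sum]
    refine Finset.sum_le_sum fun σ _ => ?_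
    have hw := (mallowsWeight_pos n β σ).le
    by_cases hJ : JumpEvent n h H κ D (Function.update t e (t e + L)) σ
    · rw [if_pos hJ]
      have hσe : t e + L ≤ (σ e : ℕ) := by simpa using hJ.2 e he
      have hF : ∑ p, F p σ = ((Finset.univ.filter fun p => t e ≤ (σ p : ℕ) ∧
          (σ p : ℕ) < t e + L) \ D).card * mallowsWeight n β σ := by
        simp only [F, hJ, true_and]
        rw [← Finset.sum_filter, Finset.sum_const, nsmul_eq_mul]
        congr 3
        ext p; simp; tauto
      rw [hF]
      refine mul_le_mul_of_nonneg_right ?_ hw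
      have h1 := card_window σ (t e) L (by have := (σ e).isLt; omega)
      have h2 := Finset.le_card_sdiff D (Finset.univ.filter fun p => t e ≤ (σ p : ℕ) ∧
          (σ p : ℕ) < t e + L)
      rw [h1] at h2
      have h3 : L ≤ ((Finset.univ.filter fun p => t e ≤ (σ p : ℕ) ∧
          (σ p : ℕ) < t e + L) \ D).card + D.card := by omega
      have h4 : (L : ℝ) ≤ ((Finset.univ.filter fun p => t e ≤ (σ p : ℕ) ∧
          (σ p : ℕ) < t e + L) \ D).card + D.card := by exact_mod_cast h3
      linarith
    · rw [if_neg hJ, mul_zero]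
      simp only [F, hJ, false_and, if_false, Finset.sum_const_zero, le_refl]
  have hswap : ∑ σ, ∑ p, F p σ = ∑ σ, ∑ p, F p (σ * Equiv.swap e p) := by
    rw [Finset.sum_comm, Finset.sum_comm (f := fun σ p => F p (σ * Equiv.swap e p))]
    refine Finset.sum_congr rfl fun p _ => ?_
    exact (Equiv.sum_comp (Equiv.mulRight (Equiv.swap e p)) (F p)).symm
  refine hlow.trans (hswap.le.trans ?_)
  unfold evWeight
  rw [Finset.mul_sum]
  refine Finset.sum_le_sum fun σ _ => ?_
  have hw := (mallowsWeight_pos n β σ).le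
  -- Only permutations in the event with the lower threshold arise after the exchange.
  have hF : ∀ p, F p (σ * Equiv.swap e p) ≠ 0 → JumpEvent n h H κ D t σ ∧
      (σ e : ℕ) < t e + L ∧ (σ e : ℕ) < (σ p : ℕ) ∧ e ≠ p := by
    intro p hp
    by_contra hcon
    refine hp (if_neg fun hc => hcon ?_)
    obtain ⟨⟨hG, hD⟩, hpD, h1, h2⟩ := hc
    have hep : e ≠ p := by rintro rfl; exact hpD he
    have h3 := hD e he
    simp only [Equiv.Perm.mul_apply, Equiv.swap_apply_left, Equiv.swap_apply_right,
      Function.update_self] at h1 h2 h3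
    refine ⟨⟨?_, ?_⟩, h2, by omega, hep⟩
    · intro c hc1 hc2
      refine le_trans ?_ (hG c hc1 hc2)
      have := card_upSet_mul_swap_le c (σ * Equiv.swap e p) (d := e) (p := p)
        (by simp only [Equiv.Perm.mul_apply, Equiv.swap_apply_right]; omega)
        (by simp only [Equiv.Perm.mul_apply, Equiv.swap_apply_right, Equiv.swap_apply_left]; omega)
      rwa [mul_assoc, Equiv.swap_mul_self, mul_one] at this
    · intro d hd
      by_cases hde : d = e
      · subst hde; exact h1
      · have h4 := hD d hd
        have hdp : d ≠ p := by rintro rfl; exact hpD hd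
        rwa [Function.update_of_ne hde, Equiv.Perm.mul_apply,
          Equiv.swap_apply_of_ne_of_ne hde hdp] at h4
  by_cases hJ : JumpEvent n h H κ D t σ
  swap
  · rw [if_neg hJ, mul_zero]
    refine le_of_eq (Finset.sum_eq_zero fun p _ => ?_)
    by_contra hp
    exact hJ (hF p hp).1
  rw [if_pos hJ]
  by_cases hlt : (σ e : ℕ) < t e + L
  swap
  · refine le_trans (le_of_eq (Finset.sum_eq_zero fun p _ => ?_)) (by positivity)
    by_contra hp
    exact hlt (hF p hp).2.1
  have hte' := hJ.2 e he
  have hsum := sum_exchange_le hβ hβ1 κ σ e (by omega) (hJ.1 _ (by omega) (by omega))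
  rw [mul_comm]
  refine le_trans ?_ (mul_le_mul_of_nonneg_left hsum hw)
  rw [Finset.mul_sum, Finset.sum_filter]
  refine Finset.sum_le_sum fun p _ => ?_
  by_cases hp : F p (σ * Equiv.swap e p) = 0
  · rw [hp]; split_ifs <;> positivity
  · obtain ⟨-, -, h1, h2⟩ := hF p hp
    rw [if_pos h1, ← mallowsWeight_mul_swap n β σ h2]
    simp only [F]
    split_ifs
    · exact le_rfl
    · exact (mallowsWeight_pos _ _ _).le

/-- Raising the thresholds of all of `D` by `L`. -/
lemma jump_window {n h H κ : ℕ} {β : ℝ} (hβ : 0 < β) (hβ1 : β ≤ 1) (D : Finset (Fin n))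
    (b : ℕ) (hD : ∀ d ∈ D, (d : ℕ) < b) (hh : h ≤ b) (L : ℕ) (hL : D.card ≤ L)
    (hH : b + L ≤ H) :
    ((L : ℝ) - D.card) ^ D.card * evWeight n β (JumpEvent n h H κ D fun _ => b + L) ≤
      (κ + 3 / β) ^ D.card * evWeight n β (JumpEvent n h H κ D fun _ => b) := by
  have hL' : (0 : ℝ) ≤ (L : ℝ) - D.card := by
    have : (D.card : ℝ) ≤ L := by exact_mod_cast hL
    linarith
  have key : ∀ D' : Finset (Fin n), D' ⊆ D →
      ((L : ℝ) - D.card) ^ D'.card * evWeight n β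
        (JumpEvent n h H κ D fun d => if d ∈ D' then b + L else b) ≤
      (κ + 3 / β) ^ D'.card * evWeight n β (JumpEvent n h H κ D fun _ => b) := by
    intro D'
    induction D' using Finset.induction_on with
    | empty => intro _; simp
    | insert e s hes ih =>
      intro hsub
      have heD : e ∈ D := hsub (Finset.mem_insert_self _ _)
      have ih' := ih fun x hx => hsub (Finset.mem_insert_of_mem hx)
      have hst := jump_step (h := h) (H := H) (κ := κ) hβ hβ1 D
        (fun d => if d ∈ s then b + L else b) e heD (by simpa [hes] using hD e heD)
        (by simpa [hes] using hh) L (by simpa [hes] using hH)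
      have hupd : Function.update (fun d => if d ∈ s then b + L else b) e
          ((if e ∈ s then b + L else b) + L) =
          fun d => if d ∈ insert e s then b + L else b := by
        funext d
        by_cases hde : d = e
        · subst hde; simp [hes]
        · rw [Function.update_of_ne hde]; simp [Finset.mem_insert, hde]
      simp only [hupd] at hst
      rw [Finset.card_insert_of_notMem hes, pow_succ, pow_succ, mul_assoc]
      calc _ ≤ ((L : ℝ) - D.card) ^ s.card * ((κ + 3 / β) * evWeight n β
            (JumpEvent n h H κ D fun d => if d ∈ s then b + L else b)) := by gcongr
        _ = (κ + 3 / β) * (((L : ℝ) - D.card) ^ s.card * evWeight n β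
            (JumpEvent n h H κ D fun d => if d ∈ s then b + L else b)) := by ring
        _ ≤ (κ + 3 / β) * ((κ + 3 / β) ^ s.card *
            evWeight n β (JumpEvent n h H κ D fun _ => b)) := by gcongr
        _ = _ := by ring
  have h1 := key D (Finset.Subset.refl D)
  have h2 : evWeight n β (JumpEvent n h H κ D fun _ => b + L) ≤
      evWeight n β (JumpEvent n h H κ D fun d => if d ∈ D then b + L else b) :=
    evWeight_mono fun σ hσ => ⟨hσ.1, fun d hd => by simpa [hd] using hσ.2 d hd⟩
  exact le_trans (by gcongr) h1

/-- Iterating over `g` consecutive windows of length `L` above `h`. -/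
lemma jump_iter {n h H κ : ℕ} {β : ℝ} (hβ : 0 < β) (hβ1 : β ≤ 1) (D : Finset (Fin n))
    (hD : ∀ d ∈ D, (d : ℕ) < h) (L : ℕ) (hL : D.card ≤ L) (g : ℕ) (hH : h + g * L ≤ H) :
    ((L : ℝ) - D.card) ^ (D.card * g) *
        evWeight n β (JumpEvent n h H κ D fun _ => h + g * L) ≤
      (κ + 3 / β) ^ (D.card * g) * evWeight n β (JumpEvent n h H κ D fun _ => h) := by
  have hL' : (0 : ℝ) ≤ (L : ℝ) - D.card := by
    have : (D.card : ℝ) ≤ L := by exact_mod_cast hL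
    linarith
  induction g with
  | zero => simp
  | succ g ih =>
    have e1 : h + (g + 1) * L = h + g * L + L := by ring
    rw [e1] at hH ⊢
    have ih' := ih (by omega)
    have hw := jump_window (h := h) (H := H) (κ := κ) hβ hβ1 D (h + g * L)
      (fun d hd => by have := hD d hd; omega) (by omega) L hL hH
    have e2 : D.card * (g + 1) = D.card * g + D.card := by ring
    rw [e2, pow_add, pow_add, mul_assoc]
    calc _ ≤ ((L : ℝ) - D.card) ^ (D.card * g) * ((κ + 3 / β) ^ D.card *
          evWeight n β (JumpEvent n h H κ D fun _ => h + g * L)) := by gcongr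
      _ = (κ + 3 / β) ^ D.card * (((L : ℝ) - D.card) ^ (D.card * g) *
          evWeight n β (JumpEvent n h H κ D fun _ => h + g * L)) := by ring
      _ ≤ (κ + 3 / β) ^ D.card * ((κ + 3 / β) ^ (D.card * g) *
          evWeight n β (JumpEvent n h H κ D fun _ => h)) := by gcongr
      _ = _ := by ring

/-- The positions below `h` that are sent to height at least `h'`. -/
noncomputable def jumpSet (n h h' : ℕ) (σ : Equiv.Perm (Fin n)) : Finset (Fin n) :=
  Finset.univ.filter fun k => (k : ℕ) < h ∧ h' ≤ (σ k : ℕ)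

/-- The probability that `u` positions jump over `g` windows: sum the bound for a fixed `D` over
all `D` with `u` elements. -/
lemma jumpSet_tail {n h κ : ℕ} {β : ℝ} (hβ : 0 < β) (hβ1 : β ≤ 1) (L g u : ℕ) (hu : u ≤ L) :
    ((L : ℝ) - u) ^ (u * g) * evWeight n β
        (fun σ => GoodCuts n h (h + g * L) κ σ ∧ u ≤ (jumpSet n h (h + g * L) σ).card) ≤
      (κ + 3 / β) ^ (u * g) * ((κ.choose u : ℝ) * evWeight n β (fun _ => True)) := by
  have hL' : (0 : ℝ) ≤ (L : ℝ) - u := by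
    have : (u : ℝ) ≤ L := by exact_mod_cast hu
    linarith
  set S : Finset (Finset (Fin n)) :=
    (Finset.univ.filter fun k : Fin n => (k : ℕ) < h).powersetCard u with hS
  have hmem : ∀ D ∈ S, (∀ d ∈ D, (d : ℕ) < h) ∧ D.card = u := by
    intro D hD
    rw [hS, Finset.mem_powersetCard] at hD
    exact ⟨fun d hd => by simpa using hD.1 hd, hD.2⟩
  have h1 : evWeight n β
        (fun σ => GoodCuts n h (h + g * L) κ σ ∧ u ≤ (jumpSet n h (h + g * L) σ).card) ≤
      ∑ D ∈ S, evWeight n β (JumpEvent n h (h + g * L) κ D fun _ => h + g * L) := by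
    refine evWeight_exists_le S fun σ hσ => ?_
    obtain ⟨D, hD, hDc⟩ := Finset.exists_subset_card_eq hσ.2
    have hD' : ∀ d ∈ D, (d : ℕ) < h ∧ h + g * L ≤ (σ d : ℕ) := fun d hd => by
      simpa [jumpSet] using hD hd
    refine ⟨D, ?_, hσ.1, fun d hd => (hD' d hd).2⟩
    rw [hS, Finset.mem_powersetCard]
    exact ⟨fun d hd => by simpa using (hD' d hd).1, hDc⟩
  have h2 : ∑ D ∈ S, evWeight n β (JumpEvent n h (h + g * L) κ D fun _ => h) ≤
      (κ.choose u : ℝ) * evWeight n β (fun _ => True) := by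
    unfold evWeight
    rw [Finset.sum_comm, Finset.mul_sum]
    refine Finset.sum_le_sum fun σ _ => ?_
    have hw := (mallowsWeight_pos n β σ).le
    rw [if_pos trivial, ← Finset.sum_filter, Finset.sum_const, nsmul_eq_mul]
    refine mul_le_mul_of_nonneg_right ?_ hw
    by_cases hG : GoodCuts n h (h + g * L) κ σ
    · have hsub : (S.filter fun D => JumpEvent n h (h + g * L) κ D (fun _ => h) σ) ⊆
          (upSet n h σ).powersetCard u := by
        intro D hD
        rw [Finset.mem_filter] at hD
        have hm := hmem D hD.1
        rw [Finset.mem_powersetCard]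
        exact ⟨fun d hd => mem_upSet.mpr ⟨hm.1 d hd, hD.2.2 d hd⟩, hm.2⟩
      have h3 := Finset.card_le_card hsub
      rw [Finset.card_powersetCard] at h3
      have h4 := Nat.choose_le_choose u (hG h le_rfl (by omega))
      exact_mod_cast h3.trans h4
    · have : (S.filter fun D => JumpEvent n h (h + g * L) κ D (fun _ => h) σ) = ∅ := by
        rw [Finset.filter_eq_empty_iff]
        exact fun D _ hJ => hG hJ.1
      rw [this]; simp
  calc _ ≤ ((L : ℝ) - u) ^ (u * g) *
        ∑ D ∈ S, evWeight n β (JumpEvent n h (h + g * L) κ D fun _ => h + g * L) := by gcongr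
    _ = ∑ D ∈ S, ((L : ℝ) - u) ^ (u * g) *
        evWeight n β (JumpEvent n h (h + g * L) κ D fun _ => h + g * L) := Finset.mul_sum _ _ _
    _ ≤ ∑ D ∈ S, (κ + 3 / β) ^ (u * g) *
        evWeight n β (JumpEvent n h (h + g * L) κ D fun _ => h) := by
      refine Finset.sum_le_sum fun D hD => ?_
      obtain ⟨hm, rfl⟩ := hmem D hD
      exact jump_iter hβ hβ1 D hm L hu g le_rfl
    _ = (κ + 3 / β) ^ (u * g) *
        ∑ D ∈ S, evWeight n β (JumpEvent n h (h + g * L) κ D fun _ => h) :=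
      (Finset.mul_sum _ _ _).symm
    _ ≤ _ := by gcongr

/-! ### Numerical estimates and the tail of one shell -/

lemma rpow_bounds {β : ℝ} (hβ : 0 < β) (hβ1 : β ≤ 1) :
    1 ≤ β ^ (-(1 : ℝ) / 16) ∧ (β ^ (-(1 : ℝ) / 16)) ^ 16 = 1 / β ∧
      β ^ (-(1 : ℝ) / 16) ≤ 1 / β := by
  have h1 : 1 ≤ β ^ (-(1 : ℝ) / 16) :=
    Real.one_le_rpow_of_pos_of_le_one_of_nonpos hβ hβ1 (by norm_num)
  have h2 : (β ^ (-(1 : ℝ) / 16)) ^ 16 = 1 / β := by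
    rw [← Real.rpow_natCast, ← Real.rpow_mul hβ.le]
    norm_num
    exact Real.rpow_neg_one β
  refine ⟨h1, h2, ?_⟩
  rw [← h2]
  exact le_self_pow₀ h1 (by norm_num)

/-- The union bound over the `q ^ 3 Y + 1` cuts of a shell is still exponentially small. -/
lemma cuts_numeric (q Y : ℕ) (hq : 64 ≤ q) (hY : 1 ≤ Y) :
    ((q : ℝ) ^ 3 * Y + 1) * (1 / 4) ^ ((q - 6) * Y) ≤
      Real.exp (-(1 / 4) * q) * Real.exp (-(1 / 4) * Y) := by
  have hq3 : q ^ 3 ≤ 2 ^ q := by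
    induction q, hq using Nat.le_induction with
    | base => norm_num
    | succ m hm ih =>
      rw [pow_succ 2 m]
      have : (m + 1) ^ 3 ≤ 2 * m ^ 3 := by
        obtain ⟨k, rfl⟩ := Nat.exists_eq_add_of_le hm
        ring_nf
        nlinarith [Nat.zero_le k, Nat.zero_le (k ^ 2), Nat.zero_le (k ^ 3)]
      omega
  have hY2 : Y + 1 ≤ 2 ^ Y := Nat.lt_two_pow_self
  obtain ⟨k, rfl⟩ := Nat.exists_eq_add_of_le hq
  obtain ⟨m, rfl⟩ := Nat.exists_eq_add_of_le hY
  set q := 64 + k with hqdef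
  set Y := 1 + m with hYdef
  have hexp : q + Y ≤ (q - 6) * Y + 7 := by
    have : q - 6 = 58 + k := by omega
    rw [this, hqdef, hYdef]
    nlinarith [Nat.zero_le (k * m)]
  have h1 : (q : ℝ) ^ 3 * Y + 1 ≤ 2 ^ (q + Y) := by
    have : q ^ 3 * Y + 1 ≤ 2 ^ (q + Y) := by
      rw [pow_add]
      calc q ^ 3 * Y + 1 ≤ q ^ 3 * (Y + 1) := by
            have : 1 ≤ q ^ 3 := Nat.one_le_pow _ _ (by omega)
            rw [Nat.mul_succ]; exact Nat.add_le_add_left this _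
        _ ≤ _ := Nat.mul_le_mul hq3 hY2
    exact_mod_cast this
  have h2 : (1 / 4 : ℝ) ^ ((q - 6) * Y) ≤ 4 ^ 7 * (1 / 4) ^ (q + Y) := by
    have : (1 / 4 : ℝ) ^ ((q - 6) * Y + 7) ≤ (1 / 4) ^ (q + Y) :=
      pow_le_pow_of_le_one (by norm_num) (by norm_num) hexp
    rw [pow_add] at this
    have h7 : (4 : ℝ) ^ 7 * (1 / 4) ^ 7 = 1 := by norm_num
    nlinarith
  have h3 : (4 : ℝ) ^ 7 * (1 / 2) ^ (q + Y) ≤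
      Real.exp (-(1 / 4) * q) * Real.exp (-(1 / 4) * Y) := by
    have hb : (1 / 2 : ℝ) ≤ Real.exp (-(1 / 2)) := by
      have := Real.add_one_le_exp (-(1 / 2) : ℝ); linarith
    have he : (4 : ℝ) ^ 7 ≤ Real.exp (1 / 4 * (q + Y)) := by
      have h4 : (4 : ℝ) ≤ Real.exp (3 / 2) := by
        have := Real.quadratic_le_exp_of_nonneg (show (0 : ℝ) ≤ 3 / 2 by norm_num)
        have h8 := Real.add_one_le_exp (3 / 2 : ℝ)
        have h9 : Real.exp (3 / 2) = Real.exp (1 / 2) * Real.exp 1 := by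
          rw [← Real.exp_add]; norm_num
        have := Real.exp_one_gt_d9
        have := Real.add_one_le_exp (1 / 2 : ℝ)
        rw [h9]; nlinarith
      calc (4 : ℝ) ^ 7 ≤ Real.exp (3 / 2) ^ 7 := by gcongr
        _ = Real.exp (7 * (3 / 2)) := by rw [← Real.exp_nat_mul]; norm_num
        _ ≤ _ := by
          apply Real.exp_le_exp.mpr
          have : (64 : ℝ) ≤ q := by exact_mod_cast hq
          have : (1 : ℝ) ≤ Y := by exact_mod_cast hY
          linarith
    calc _ ≤ Real.exp (1 / 4 * (q + Y)) * Real.exp (-(1 / 2)) ^ (q + Y) := by gcongr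
      _ = _ := by
        rw [← Real.exp_nat_mul, ← Real.exp_add, ← Real.exp_add]
        congr 1; push_cast; ring
  calc _ ≤ (2 : ℝ) ^ (q + Y) * (4 ^ 7 * (1 / 4) ^ (q + Y)) := by gcongr
    _ = 4 ^ 7 * (1 / 2) ^ (q + Y) := by
      rw [mul_left_comm, ← mul_pow]; norm_num
    _ ≤ _ := h3

/-- The gain `(4 / q) ^ q` of one jump over `q` windows beats its share `q ^ 7 e` of the entropy. -/
lemma jump_numeric (q : ℕ) (hq : 64 ≤ q) :
    (4 / (q : ℝ)) ^ q * ((q : ℝ) ^ 7 * Real.exp 1) ≤ Real.exp (-2 * q) := by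
  have hq' : (64 : ℝ) ≤ q := by exact_mod_cast hq
  obtain ⟨k, hk⟩ := Nat.exists_eq_add_of_le (show 7 ≤ q by omega)
  have h1 := Real.exp_one_gt_d9
  have h2 := Real.exp_one_lt_d9
  have h4 : (4 : ℝ) ≤ Real.exp (3 / 2) := by
    have h9 : Real.exp (3 / 2) = Real.exp (1 / 2) * Real.exp 1 := by
      rw [← Real.exp_add]; norm_num
    have := Real.add_one_le_exp (1 / 2 : ℝ)
    rw [h9]; nlinarith
  have h5 : (1 / 16 : ℝ) ≤ Real.exp (-(5 / 2)) := by
    rw [Real.exp_neg, ← one_div]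
    refine one_div_le_one_div_of_le (Real.exp_pos _) ?_
    have h6 : Real.exp (5 / 2) ^ 2 = Real.exp 1 ^ 5 := by
      rw [← Real.exp_nat_mul, ← Real.exp_nat_mul]; norm_num
    have h7 : Real.exp 1 ^ 5 ≤ 2.7182818286 ^ 5 := by gcongr
    have h8 : (2.7182818286 : ℝ) ^ 5 ≤ 16 ^ 2 := by norm_num
    exact (pow_le_pow_iff_left₀ (Real.exp_pos _).le (by norm_num) two_ne_zero).mp (by linarith)
  have h6 : (4 : ℝ) / q ≤ Real.exp (-(5 / 2)) := by
    refine le_trans ?_ h5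
    rw [div_le_div_iff₀ (by linarith) (by norm_num)]; linarith
  have h7 : (4 / (q : ℝ)) ^ q = (4 / (q : ℝ)) ^ 7 * (4 / (q : ℝ)) ^ k := by
    rw [← pow_add, ← hk]
  have hkr : (q : ℝ) = 7 + k := by exact_mod_cast hk
  have h8 : (4 / (q : ℝ)) ^ 7 * (q : ℝ) ^ 7 = 4 ^ 7 := by
    rw [← mul_pow]; congr 1; field_simp
  calc (4 / (q : ℝ)) ^ q * ((q : ℝ) ^ 7 * Real.exp 1)
      = 4 ^ 7 * (4 / (q : ℝ)) ^ k * Real.exp 1 := by rw [h7, ← h8]; ring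
    _ ≤ Real.exp (3 / 2) ^ 7 * Real.exp (-(5 / 2)) ^ k * Real.exp 1 := by gcongr
    _ = Real.exp (7 * (3 / 2) + k * (-(5 / 2)) + 1) := by
      rw [← Real.exp_nat_mul, ← Real.exp_nat_mul, ← Real.exp_add, ← Real.exp_add]; norm_num
    _ ≤ _ := by
      apply Real.exp_le_exp.mpr
      linarith

/-- The shell at distance about `q ^ 4 / β`: the probability that more than `Y / q ^ 6` positions
below `h` jump by `q ^ 3 Y`. The cuts are required to carry at most `q Y` crossings, and the jump
is divided into `q` windows of length `q ^ 2 Y`. -/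
lemma shell_tail {n : ℕ} {β : ℝ} (hβ : 0 < β) (hβ1 : β ≤ 1) (q Y h : ℕ) (hq : 64 ≤ q)
    (hY : 1 / β ≤ Y) :
    evWeight n β (fun σ => Y / q ^ 6 + 1 ≤ (jumpSet n h (h + q * (q ^ 2 * Y)) σ).card) ≤
      2 * Real.exp (-(1 / 4) * q) * Real.exp (-(1 / 4) * β ^ (-(1 : ℝ) / 16)) *
        evWeight n β (fun _ => True) := by
  set Z := evWeight n β (fun _ => True) with hZ
  have hZ0 : 0 ≤ Z := evWeight_nonneg _ _ _
  set u := Y / q ^ 6 + 1 with hu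
  obtain ⟨hθ1, hθ16, hθβ⟩ := rpow_bounds hβ hβ1
  set θ := β ^ (-(1 : ℝ) / 16) with hθ
  set H := h + q * (q ^ 2 * Y) with hH
  have hq' : (64 : ℝ) ≤ q := by exact_mod_cast hq
  have hq0 : (0 : ℝ) < q := by linarith
  have hYr : (1 : ℝ) ≤ Y := by linarith
  have hY1 : 1 ≤ Y := by exact_mod_cast hYr
  have hsplit : evWeight n β (fun σ => u ≤ (jumpSet n h H σ).card) ≤
      evWeight n β (fun σ => ¬ GoodCuts n h H (q * Y) σ) +
      evWeight n β (fun σ => GoodCuts n h H (q * Y) σ ∧ u ≤ (jumpSet n h H σ).card) := by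
    have := evWeight_exists_le (n := n) (β := β) (Finset.univ : Finset Bool)
      (P := fun σ => u ≤ (jumpSet n h H σ).card)
      (Q := fun b σ => bif b then ¬ GoodCuts n h H (q * Y) σ else
        GoodCuts n h H (q * Y) σ ∧ u ≤ (jumpSet n h H σ).card) (by
          intro σ hσ
          by_cases hG : GoodCuts n h H (q * Y) σ
          · exact ⟨false, Finset.mem_univ _, hG, hσ⟩
          · exact ⟨true, Finset.mem_univ _, hG⟩)
    simpa using this
  have hbad : evWeight n β (fun σ => ¬ GoodCuts n h H (q * Y) σ) ≤
      Real.exp (-(1 / 4) * q) * Real.exp (-(1 / 4) * θ) * Z := by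
    have h1 := evWeight_exists_le (n := n) (β := β) (Finset.Icc h H)
      (P := fun σ => ¬ GoodCuts n h H (q * Y) σ)
      (Q := fun c σ => 6 * Y + (q - 6) * Y ≤ (upSet n c σ).card) (by
        intro σ hσ
        unfold GoodCuts at hσ
        push Not at hσ
        obtain ⟨c, hc1, hc2, hc3⟩ := hσ
        refine ⟨c, Finset.mem_Icc.mpr ⟨hc1, hc2⟩, ?_⟩
        rw [← add_mul, show 6 + (q - 6) = q by omega]
        exact hc3.le)
    have h2 : ∑ c ∈ Finset.Icc h H, evWeight n β
        (fun σ => 6 * Y + (q - 6) * Y ≤ (upSet n c σ).card) ≤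
        ((q : ℝ) ^ 3 * Y + 1) * ((1 / 4) ^ ((q - 6) * Y) * Z) := by
      refine le_trans (Finset.sum_le_card_nsmul _ _ _ fun c _ =>
        evWeight_up_tail n hβ hβ1 c Y hY _) ?_
      rw [nsmul_eq_mul, Nat.card_Icc]
      refine le_of_eq ?_
      congr 1
      rw [show H + 1 - h = q * (q ^ 2 * Y) + 1 by omega]
      push_cast; ring
    refine h1.trans (h2.trans ?_)
    rw [← mul_assoc]
    refine mul_le_mul_of_nonneg_right ((cuts_numeric q Y hq hY1).trans ?_) hZ0
    exact mul_le_mul_of_nonneg_left (Real.exp_le_exp.mpr (by linarith)) (Real.exp_pos _).le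
  have hgood : evWeight n β
      (fun σ => GoodCuts n h H (q * Y) σ ∧ u ≤ (jumpSet n h H σ).card) ≤
      Real.exp (-(1 / 4) * q) * Real.exp (-(1 / 4) * θ) * Z := by
    have hYu : Y ≤ q ^ 6 * u := by
      have := Nat.div_add_mod Y (q ^ 6)
      have := Nat.mod_lt Y (show 0 < q ^ 6 by positivity)
      rw [hu, mul_add]; omega
    have hYur : (Y : ℝ) ≤ (q : ℝ) ^ 6 * u := by exact_mod_cast hYu
    have huY : u ≤ 2 * Y := by
      have := Nat.div_le_self Y (q ^ 6)
      rw [hu]; linarith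
    have huYr : (u : ℝ) ≤ 2 * Y := by exact_mod_cast huY
    have hu1 : (1 : ℝ) ≤ u := by
      have : 1 ≤ u := Nat.le_add_left 1 _
      exact_mod_cast this
    have huL : u ≤ q ^ 2 * Y := by
      have : 2 ≤ q ^ 2 := by nlinarith
      exact huY.trans (Nat.mul_le_mul_right _ this)
    have h1 := jumpSet_tail (n := n) (h := h) (κ := q * Y) hβ hβ1 (q ^ 2 * Y) q u huL
    rw [← hH, ← hZ] at h1
    set W := evWeight n β
      (fun σ => GoodCuts n h H (q * Y) σ ∧ u ≤ (jumpSet n h H σ).card) with hW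
    have hLu : (q : ℝ) ^ 2 * Y / 2 ≤ ((q ^ 2 * Y : ℕ) : ℝ) - u := by
      have hq2 : (8 : ℝ) ≤ (q : ℝ) ^ 2 := by nlinarith
      have : (8 : ℝ) * Y ≤ (q : ℝ) ^ 2 * Y := by gcongr
      push_cast; linarith
    have hLu0 : 0 < ((q ^ 2 * Y : ℕ) : ℝ) - u := lt_of_lt_of_le (by positivity) hLu
    have hM : ((q * Y : ℕ) : ℝ) + 3 / β ≤ 2 * q * Y := by
      have : 3 / β = 3 * (1 / β) := by ring
      push_cast; nlinarith
    have hρ : (((q * Y : ℕ) : ℝ) + 3 / β) / (((q ^ 2 * Y : ℕ) : ℝ) - u) ≤ 4 / q := by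
      rw [div_le_div_iff₀ hLu0 hq0]
      calc _ ≤ (2 * q * Y) * (q : ℝ) := by gcongr
        _ = 4 * ((q : ℝ) ^ 2 * Y / 2) := by ring
        _ ≤ _ := by gcongr
    have hch : ((q * Y).choose u : ℝ) ≤ ((q : ℝ) ^ 7 * Real.exp 1) ^ u := by
      calc ((q * Y).choose u : ℝ) ≤ ((q * Y : ℕ) : ℝ) ^ u / (u.factorial : ℝ) :=
            Nat.choose_le_pow_div u (q * Y)
        _ ≤ ((q : ℝ) ^ 7 * u) ^ u / (u.factorial : ℝ) := by
            gcongr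
            push_cast
            calc (q : ℝ) * Y ≤ q * ((q : ℝ) ^ 6 * u) := by gcongr
              _ = _ := by ring
        _ = ((q : ℝ) ^ 7) ^ u * ((u : ℝ) ^ u / (u.factorial : ℝ)) := by rw [mul_pow]; ring
        _ ≤ ((q : ℝ) ^ 7) ^ u * Real.exp u := by
            gcongr
            exact Real.pow_div_factorial_le_exp (u : ℝ) (by positivity) u
        _ = _ := by rw [mul_pow, ← Real.exp_nat_mul, mul_one]
    have h2 : W ≤ ((((q * Y : ℕ) : ℝ) + 3 / β) / (((q ^ 2 * Y : ℕ) : ℝ) - u)) ^ (u * q) *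
        (((q * Y).choose u : ℝ) * Z) := by
      rw [div_pow, div_mul_eq_mul_div, le_div_iff₀ (by positivity), mul_comm]
      exact h1
    -- The exponent `1 / 16` enters here: since `q ^ 6 u ≥ Y ≥ θ ^ 16`, either `q ≥ θ` or `q u ≥ θ`.
    have hqu : θ ≤ q * u := by
      rcases le_total θ q with h3 | h3
      · nlinarith
      · have h4 : θ ^ 16 ≤ (q : ℝ) ^ 5 * (q * u) := by
          calc θ ^ 16 ≤ Y := by rw [hθ16]; exact hY
            _ ≤ _ := hYur
            _ = _ := by ring
        have h5 : (q : ℝ) ^ 5 * (q * u) ≤ θ ^ 5 * (q * u) := by gcongr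
        have h6 : θ ^ 5 * θ ≤ θ ^ 5 * (q * u) := by
          have : θ ^ 5 * θ ≤ θ ^ 16 := by
            rw [← pow_succ]; exact pow_le_pow_right₀ hθ1 (by norm_num)
          linarith
        exact le_of_mul_le_mul_left h6 (by positivity)
    have hqu2 : (q : ℝ) ≤ q * u := by nlinarith
    calc W ≤ (4 / (q : ℝ)) ^ (u * q) * (((q : ℝ) ^ 7 * Real.exp 1) ^ u * Z) := by
          refine h2.trans ?_
          gcongr
      _ = ((4 / (q : ℝ)) ^ q * ((q : ℝ) ^ 7 * Real.exp 1)) ^ u * Z := by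
          rw [mul_comm u q, pow_mul, ← mul_assoc, ← mul_pow]
      _ ≤ Real.exp (-2 * q) ^ u * Z := by
          have := jump_numeric q hq
          gcongr
      _ = Real.exp (-2 * (q * u)) * Z := by
          rw [← Real.exp_nat_mul]; congr 2; ring
      _ ≤ _ := by
          rw [← Real.exp_add]
          refine mul_le_mul_of_nonneg_right (Real.exp_le_exp.mpr ?_) hZ0
          linarith
  linarith

/-! ### The exponential clocks -/

/-- A long clock: `x_k = l - k` is counted when `E_k > x_k / 8`. The exponential moment of the sum
at parameter `β / 8` is at most `exp (9 / β)`. -/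
lemma clocks_tail {n : ℕ} {β : ℝ} (hβ : 0 < β) (hβ1 : β ≤ 1) (l : Fin n) :
    (Measure.pi fun _ : Fin n => ProbabilityTheory.expMeasure (2 * β))
      {e | 80 * (β ^ 2)⁻¹ < ∑ k ∈ Finset.univ.filter (fun k => k < l),
        if (((l : ℕ) : ℝ) - (k : ℕ)) / 8 < e k then ((l : ℕ) : ℝ) - (k : ℕ) else 0} ≤
      ENNReal.ofReal (Real.exp (-(1 / β))) := by
  have h2β : 0 < 2 * β := by linarith
  have : IsProbabilityMeasure (ProbabilityTheory.expMeasure (2 * β)) :=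
    ProbabilityTheory.isProbabilityMeasure_expMeasure h2β
  set μ := ProbabilityTheory.expMeasure (2 * β) with hμ
  set s := Finset.univ.filter (fun k : Fin n => k < l) with hs
  let x : Fin n → ℝ := fun k => ((l : ℕ) : ℝ) - (k : ℕ)
  have hx : ∀ k ∈ s, 0 ≤ x k := by
    intro k hk
    have : k < l := by simpa [hs] using hk
    have : ((k : ℕ) : ℝ) < (l : ℕ) := by exact_mod_cast this
    simp only [x]; linarith
  let f : Fin n → ℝ → ℝ≥0∞ := fun k y =>
    if x k / 8 < y then ENNReal.ofReal (Real.exp (β / 8 * x k)) else 1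
  have hfm : ∀ k, Measurable (f k) := fun k =>
    Measurable.ite measurableSet_Ioi measurable_const measurable_const
  have htail : ∀ a : ℝ, 0 ≤ a → μ (Set.Ioi a) = ENNReal.ofReal (Real.exp (-(2 * β * a))) := by
    intro a ha
    rw [← Set.compl_Iic, prob_compl_eq_one_sub measurableSet_Iic, ← ProbabilityTheory.ofReal_cdf,
      hμ, ProbabilityTheory.cdf_expMeasure_eq h2β, if_pos ha, ← ENNReal.ofReal_one,
      ← ENNReal.ofReal_sub]
    · congr 1; ring
    · have : Real.exp (-(2 * β * a)) ≤ 1 := by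
        rw [Real.exp_le_one_iff]; have : 0 ≤ 2 * β * a := by positivity
        linarith
      linarith
  have hint : ∀ k ∈ s, ∫⁻ y, f k y ∂μ ≤
      ENNReal.ofReal (Real.exp (Real.exp (-(β / 8) * ((l : ℕ) - (k : ℕ) : ℕ)))) := by
    intro k hk
    have hxk := hx k hk
    have hkl : (k : ℕ) ≤ (l : ℕ) := by
      have : k < l := by simpa [hs] using hk
      exact le_of_lt this
    have hle : ∀ y, f k y ≤ 1 +
        (Set.Ioi (x k / 8)).indicator (fun _ => ENNReal.ofReal (Real.exp (β / 8 * x k))) y := by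
      intro y
      by_cases hy : x k / 8 < y
      · simp [f, hy]
      · simp [f, hy]
    refine (lintegral_mono hle).trans ?_
    rw [lintegral_add_left measurable_const, lintegral_indicator_const measurableSet_Ioi,
      htail _ (by linarith), lintegral_const, measure_univ, mul_one,
      ← ENNReal.ofReal_mul (Real.exp_pos _).le, ← Real.exp_add, ← ENNReal.ofReal_one,
      ← ENNReal.ofReal_add (by norm_num) (Real.exp_pos _).le]
    refine ENNReal.ofReal_le_ofReal ?_
    have h1 : β / 8 * x k + -(2 * β * (x k / 8)) = -(β / 8) * ((l : ℕ) - (k : ℕ) : ℕ) := by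
      rw [Nat.cast_sub hkl]; simp only [x]; ring
    rw [h1, add_comm]
    exact Real.add_one_le_exp _
  have hind : ProbabilityTheory.iIndepFun (fun k (e : Fin n → ℝ) => f k (e k))
      (Measure.pi fun _ : Fin n => μ) :=
    ProbabilityTheory.iIndepFun_pi fun k => (hfm k).aemeasurable
  have hprod : ∫⁻ e, ∏ k ∈ s, f k (e k) ∂(Measure.pi fun _ : Fin n => μ) ≤
      ENNReal.ofReal (Real.exp (9 / β)) := by
    rw [ProbabilityTheory.lintegral_prod_eq_prod_lintegral_of_indepFun s
      (fun k (e : Fin n → ℝ) => f k (e k)) hind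
      (fun k => (hfm k).comp (measurable_pi_apply k))]
    have h1 : ∀ k, ∫⁻ e, f k (e k) ∂(Measure.pi fun _ : Fin n => μ) = ∫⁻ y, f k y ∂μ := fun k =>
      (measurePreserving_eval (fun _ : Fin n => μ) k).lintegral_comp (hfm k)
    simp only [h1]
    refine (Finset.prod_le_prod' hint).trans ?_
    rw [← ENNReal.ofReal_prod_of_nonneg (fun k _ => (Real.exp_pos _).le), ← Real.exp_sum]
    refine ENNReal.ofReal_le_ofReal (Real.exp_le_exp.mpr ?_)
    refine (sum_exp_le s (fun k => (l : ℕ) - (k : ℕ)) ?_ (a := β / 8) (by linarith)).trans ?_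
    · intro a ha b hb hab
      have ha' : a < l := by simpa [hs] using ha
      have hb' : b < l := by simpa [hs] using hb
      simp only at hab
      exact Fin.ext (by omega)
    · have : 1 ≤ 1 / β := by rw [le_div_iff₀ hβ]; linarith
      have e1 : 1 / (β / 8) = 8 * (1 / β) := by field_simp
      have e2 : 9 / β = 9 * (1 / β) := by ring
      linarith
  have hsub : {e : Fin n → ℝ | 80 * (β ^ 2)⁻¹ < ∑ k ∈ s,
        if (((l : ℕ) : ℝ) - (k : ℕ)) / 8 < e k then ((l : ℕ) : ℝ) - (k : ℕ) else 0} ⊆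
      {e | ENNReal.ofReal (Real.exp (10 / β)) ≤ ∏ k ∈ s, f k (e k)} := by
    intro e he
    simp only [Set.mem_ofPred_eq] at he ⊢
    have hf : ∀ k, f k (e k) =
        ENNReal.ofReal (Real.exp (β / 8 * (if x k / 8 < e k then x k else 0))) := by
      intro k
      by_cases hy : x k / 8 < e k
      · simp [f, hy]
      · simp [f, hy]
    simp only [hf]
    rw [← ENNReal.ofReal_prod_of_nonneg (fun k _ => (Real.exp_pos _).le), ← Real.exp_sum,
      ← Finset.mul_sum]
    refine ENNReal.ofReal_le_ofReal (Real.exp_le_exp.mpr ?_)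
    have e1 : 10 / β = β / 8 * (80 * (β ^ 2)⁻¹) := by field_simp; norm_num
    rw [e1]
    exact mul_le_mul_of_nonneg_left he.le (by linarith)
  refine (measure_mono hsub).trans ?_
  have hmk := mul_meas_ge_le_lintegral (μ := Measure.pi fun _ : Fin n => μ)
    (f := fun e => ∏ k ∈ s, f k (e k))
    (Finset.measurable_prod s fun k _ => (hfm k).comp (measurable_pi_apply k))
    (ENNReal.ofReal (Real.exp (10 / β)))
  have h3 := hmk.trans hprod
  rw [mul_comm, ← ENNReal.le_div_iff_mul_le (by simp [Real.exp_pos]) (by simp),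
    ← ENNReal.ofReal_div_of_pos (Real.exp_pos _), ← Real.exp_sub] at h3
  refine h3.trans (le_of_eq ?_)
  congr 2
  ring

/-! ### Decomposition of the sum over `H_l` into shells -/

/-- Positions `k` with `l - k > q ^ 4 Y` which are sent to height at least `l - q ^ 4 Y + q ^ 3 Y`.
The set is empty when `l ≤ q ^ 4 Y`, where the subtraction truncates. -/
noncomputable def shellSet (n : ℕ) (l : Fin n) (Y q : ℕ) (σ : Equiv.Perm (Fin n)) :
    Finset (Fin n) :=
  jumpSet n ((l : ℕ) - q ^ 4 * Y) ((l : ℕ) - q ^ 4 * Y + q * (q ^ 2 * Y)) σ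

/-- Some shell `64 ≤ q ≤ n` contains more than `Y / q ^ 6` positions. -/
def BadPerm (n : ℕ) (l : Fin n) (Y : ℕ) (σ : Equiv.Perm (Fin n)) : Prop :=
  ∃ q ∈ Finset.Icc 64 n, Y / q ^ 6 + 1 ≤ (shellSet n l Y q σ).card

lemma badPerm_tail {n : ℕ} {β : ℝ} (hβ : 0 < β) (hβ1 : β ≤ 1) (l : Fin n) (Y : ℕ)
    (hY : 1 / β ≤ Y) :
    evWeight n β (BadPerm n l Y) ≤
      10 * Real.exp (-(1 / 4) * β ^ (-(1 : ℝ) / 16)) * evWeight n β (fun _ => True) := by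
  refine (evWeight_exists_le (Finset.Icc 64 n)
    (Q := fun q σ => Y / q ^ 6 + 1 ≤ (shellSet n l Y q σ).card) fun σ hσ => hσ).trans ?_
  refine (Finset.sum_le_sum fun q hq =>
    shell_tail hβ hβ1 q Y ((l : ℕ) - q ^ 4 * Y) (Finset.mem_Icc.mp hq).1 hY).trans ?_
  rw [← Finset.sum_mul, ← Finset.sum_mul, ← Finset.mul_sum]
  have h := sum_exp_le (Finset.Icc 64 n) (fun q => q) (fun _ _ _ _ h => h)
    (a := 1 / 4) (by norm_num)
  refine mul_le_mul_of_nonneg_right (mul_le_mul_of_nonneg_right ?_ (Real.exp_pos _).le)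
    (evWeight_nonneg _ _ _)
  norm_num at h ⊢
  linarith

/-- A position `k ∈ H_l` with `l - k` large and a short clock lies in a shell `q` for which
`l - k` is comparable to `q ^ 4 Y`. -/
lemma exists_shell {n : ℕ} (l k : Fin n) (Y : ℕ) (hY : 1 ≤ Y) (σ : Equiv.Perm (Fin n)) (e : ℝ)
    (hkl : k < l) (hb : ((l : ℕ) : ℝ) ≤ max ((k : ℕ) : ℝ) ((σ k : ℕ) : ℝ) + e)
    (hx : 64 ^ 4 * Y < (l : ℕ) - (k : ℕ)) (he : e ≤ (((l : ℕ) : ℝ) - (k : ℕ)) / 8) :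
    ∃ q ∈ Finset.Icc 64 n, k ∈ shellSet n l Y q σ ∧
      ((l : ℕ) : ℝ) - (k : ℕ) ≤ 2 * (q : ℝ) ^ 4 * Y := by
  have hklN : (k : ℕ) < (l : ℕ) := hkl
  have hklr : ((k : ℕ) : ℝ) < (l : ℕ) := by exact_mod_cast hklN
  obtain ⟨x, hxdef⟩ := Nat.exists_eq_add_of_le hklN.le
  have hxr : ((l : ℕ) : ℝ) = (k : ℕ) + x := by exact_mod_cast hxdef
  have hx' : 64 ^ 4 * Y < x := by omega
  have hex : ∃ m : ℕ, x ≤ m ^ 4 * Y :=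
    ⟨x, (Nat.le_self_pow (by norm_num) x).trans (Nat.le_mul_of_pos_right _ hY)⟩
  set m := Nat.find hex with hm
  have hm1 : x ≤ m ^ 4 * Y := Nat.find_spec hex
  have hm64 : 64 < m := by
    by_contra hcon
    have : m ^ 4 * Y ≤ 64 ^ 4 * Y :=
      Nat.mul_le_mul_right _ (Nat.pow_le_pow_left (by omega) 4)
    omega
  obtain ⟨q, hq⟩ : ∃ q, m = q + 1 := ⟨m - 1, by omega⟩
  have hq64 : 64 ≤ q := by omega
  have hq1 : q ^ 4 * Y < x := by
    have := Nat.find_min hex (m := q) (by omega)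
    omega
  have hqx : q < x := lt_of_le_of_lt
    ((Nat.le_self_pow (by norm_num) q).trans (Nat.le_mul_of_pos_right (q ^ 4) hY)) hq1
  have hln := l.isLt
  have hq64r : (64 : ℝ) ≤ q := by exact_mod_cast hq64
  have hYr : (1 : ℝ) ≤ Y := by exact_mod_cast hY
  have hx2 : (x : ℝ) ≤ 2 * (q : ℝ) ^ 4 * Y := by
    have h1 : (x : ℝ) ≤ ((q : ℝ) + 1) ^ 4 * Y := by
      rw [hq] at hm1; exact_mod_cast hm1
    have h2 : ((q : ℝ) + 1) ^ 4 ≤ 2 * (q : ℝ) ^ 4 := by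
      have a1 : ((q : ℝ) + 1) ^ 2 ≤ 1.1 * (q : ℝ) ^ 2 := by nlinarith
      calc ((q : ℝ) + 1) ^ 4 = (((q : ℝ) + 1) ^ 2) ^ 2 := by ring
        _ ≤ (1.1 * (q : ℝ) ^ 2) ^ 2 := by gcongr
        _ = 1.21 * (q : ℝ) ^ 4 := by ring
        _ ≤ _ := by gcongr; norm_num
    exact h1.trans (mul_le_mul_of_nonneg_right h2 (by linarith))
  refine ⟨q, Finset.mem_Icc.mpr ⟨hq64, by omega⟩, ?_, by rw [hxr]; linarith⟩
  unfold shellSet jumpSet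
  rw [Finset.mem_filter]
  refine ⟨Finset.mem_univ _, by omega, ?_⟩
  have hx0 : (0 : ℝ) < x := by linarith
  have hσ : ((l : ℕ) : ℝ) ≤ ((σ k : ℕ) : ℝ) + x / 8 := by
    rcases max_cases ((k : ℕ) : ℝ) ((σ k : ℕ) : ℝ) with ⟨h, -⟩ | ⟨h, -⟩ <;> rw [h] at hb <;> linarith
  have h3 : (q : ℝ) * ((q : ℝ) ^ 2 * Y) ≤ 3 / 4 * ((q : ℝ) ^ 4 * Y) := by
    have h4 : 0 ≤ (q : ℝ) ^ 3 * Y := by positivity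
    nlinarith
  have hfin : (l : ℕ) + q * (q ^ 2 * Y) ≤ (σ k : ℕ) + q ^ 4 * Y := by
    have : ((l : ℕ) : ℝ) + q * ((q : ℝ) ^ 2 * Y) ≤ ((σ k : ℕ) : ℝ) + (q : ℝ) ^ 4 * Y := by
      linarith
    exact_mod_cast this
  omega

/-- Outside the bad event, the sum over `H_l` is `O(Y ^ 2)` up to the contribution of the long
clocks. -/
lemma sum_Hset_le {n : ℕ} (l : Fin n) (Y : ℕ) (hY : 1 ≤ Y) (ω : Equiv.Perm (Fin n) × (Fin n → ℝ))
    (hbad : ¬ BadPerm n l Y ω.1) :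
    ∑ k ∈ Hset n ω l, (((l : ℕ) : ℝ) - ((k : ℕ) : ℝ)) ≤
      (64 ^ 4 * (Y : ℝ)) ^ 2 + 2 * (Y : ℝ) ^ 2 +
      ∑ k ∈ Finset.univ.filter (fun k => k < l),
        if (((l : ℕ) : ℝ) - (k : ℕ)) / 8 < ω.2 k then ((l : ℕ) : ℝ) - (k : ℕ) else 0 := by
  set s := Finset.univ.filter (fun k : Fin n => k < l) with hs
  have hpos : ∀ k ∈ s, (0 : ℝ) ≤ ((l : ℕ) : ℝ) - (k : ℕ) := by
    intro k hk
    have : k < l := by simpa [hs] using hk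
    have : ((k : ℕ) : ℝ) < (l : ℕ) := by exact_mod_cast this
    linarith
  -- Contributions of the near positions (`A`), the long clocks (`B`) and the shells (`D`).
  let A : Fin n → ℝ := fun k =>
    if (l : ℕ) - (k : ℕ) ≤ 64 ^ 4 * Y then ((l : ℕ) : ℝ) - (k : ℕ) else 0
  let B : Fin n → ℝ := fun k =>
    if (((l : ℕ) : ℝ) - (k : ℕ)) / 8 < ω.2 k then ((l : ℕ) : ℝ) - (k : ℕ) else 0
  let D : Fin n → ℝ := fun k => ∑ q ∈ Finset.Icc 64 n,
    if k ∈ shellSet n l Y q ω.1 then 2 * (q : ℝ) ^ 4 * Y else 0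
  have hA0 : ∀ k ∈ s, 0 ≤ A k := fun k hk => by
    simp only [A]; split_ifs <;> [exact hpos k hk; exact le_rfl]
  have hB0 : ∀ k ∈ s, 0 ≤ B k := fun k hk => by
    simp only [B]; split_ifs <;> [exact hpos k hk; exact le_rfl]
  have hD0 : ∀ k, 0 ≤ D k := fun k => Finset.sum_nonneg fun q _ => by
    split_ifs <;> positivity
  have hsub : Hset n ω l ⊆ s := by
    intro k hk
    simp only [Hset, Finset.mem_filter] at hk
    simp [hs, hk.2.1]
  have hpt : ∀ k ∈ Hset n ω l, ((l : ℕ) : ℝ) - (k : ℕ) ≤ A k + D k + B k := by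
    intro k hk
    have hks := hsub hk
    have h0 := hA0 k hks
    have h1 := hB0 k hks
    have h2 := hD0 k
    by_cases hx : (l : ℕ) - (k : ℕ) ≤ 64 ^ 4 * Y
    · have : A k = ((l : ℕ) : ℝ) - (k : ℕ) := if_pos hx
      linarith
    by_cases he : (((l : ℕ) : ℝ) - (k : ℕ)) / 8 < ω.2 k
    · have : B k = ((l : ℕ) : ℝ) - (k : ℕ) := if_pos he
      linarith
    have hk := (Finset.mem_filter.mp (show k ∈ Finset.univ.filter _ from hk)).2
    obtain ⟨q, hq, hkq, hle⟩ := exists_shell l k Y hY ω.1 (ω.2 k) hk.1 hk.2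
      (not_le.mp hx) (not_lt.mp he)
    have : (if k ∈ shellSet n l Y q ω.1 then 2 * (q : ℝ) ^ 4 * Y else 0) ≤ D k :=
      Finset.single_le_sum (f := fun q : ℕ =>
        if k ∈ shellSet n l Y q ω.1 then 2 * (q : ℝ) ^ 4 * Y else 0)
        (fun q _ => by split_ifs <;> positivity) hq
    rw [if_pos hkq] at this
    linarith
  have hAsum : ∑ k ∈ s, A k ≤ (64 ^ 4 * (Y : ℝ)) ^ 2 := by
    have hcard : (s.filter fun k : Fin n => (l : ℕ) - (k : ℕ) ≤ 64 ^ 4 * Y).card ≤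
        64 ^ 4 * Y := by
      calc _ ≤ (Finset.Ico ((l : ℕ) - 64 ^ 4 * Y) (l : ℕ)).card := by
            refine Finset.card_le_card_of_injOn (fun k : Fin n => (k : ℕ)) ?_
              (fun a _ b _ h => Fin.ext h)
            intro k hk
            simp only [Finset.coe_filter, hs, Finset.mem_filter, Finset.mem_univ, true_and,
              Set.mem_ofPred_eq] at hk
            have : (k : ℕ) < (l : ℕ) := hk.1
            simp only [Finset.coe_Ico, Set.mem_Ico]
            omega
        _ ≤ _ := by rw [Nat.card_Ico]; omega
    simp only [A]
    rw [← Finset.sum_filter]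
    refine (Finset.sum_le_card_nsmul _ _ (64 ^ 4 * (Y : ℝ)) ?_).trans ?_
    · intro k hk
      rw [Finset.mem_filter] at hk
      have : (l : ℕ) ≤ 64 ^ 4 * Y + (k : ℕ) := by omega
      have : ((l : ℕ) : ℝ) ≤ 64 ^ 4 * Y + (k : ℕ) := by exact_mod_cast this
      linarith
    · rw [nsmul_eq_mul, pow_two]
      refine mul_le_mul_of_nonneg_right ?_ (by positivity)
      exact_mod_cast hcard
  have hDsum : ∑ k ∈ s, D k ≤ 2 * (Y : ℝ) ^ 2 := by
    simp only [D]
    rw [Finset.sum_comm]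
    have hq : ∀ q ∈ Finset.Icc 64 n, ∑ k ∈ s,
        (if k ∈ shellSet n l Y q ω.1 then 2 * (q : ℝ) ^ 4 * Y else 0) ≤
        2 * (Y : ℝ) ^ 2 * ((q : ℝ) ^ 2)⁻¹ := by
      intro q hq
      have hq64 := (Finset.mem_Icc.mp hq).1
      have hq0 : (0 : ℝ) < q := by
        have : 0 < q := by omega
        exact_mod_cast this
      have hc : (shellSet n l Y q ω.1).card ≤ Y / q ^ 6 := by
        by_contra hcon
        exact hbad ⟨q, hq, by omega⟩
      have hc' : ((s.filter fun k => k ∈ shellSet n l Y q ω.1).card : ℝ) ≤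
          (Y : ℝ) / (q : ℝ) ^ 6 := by
        have h1 : (s.filter fun k => k ∈ shellSet n l Y q ω.1).card ≤
            (shellSet n l Y q ω.1).card :=
          Finset.card_le_card fun k hk => (Finset.mem_filter.mp hk).2
        calc _ ≤ ((Y / q ^ 6 : ℕ) : ℝ) := by exact_mod_cast h1.trans hc
          _ ≤ (Y : ℝ) / ((q ^ 6 : ℕ) : ℝ) := Nat.cast_div_le
          _ = _ := by push_cast; rfl
      rw [← Finset.sum_filter, Finset.sum_const, nsmul_eq_mul]
      calc _ ≤ (Y : ℝ) / (q : ℝ) ^ 6 * (2 * (q : ℝ) ^ 4 * Y) := by gcongr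
        _ = _ := by field_simp
    refine (Finset.sum_le_sum hq).trans ?_
    rw [← Finset.mul_sum]
    have h2 : ∑ q ∈ Finset.Icc 64 n, ((q : ℝ) ^ 2)⁻¹ ≤ 1 := by
      have h3 := sum_Ioo_inv_sq_le (α := ℝ) 63 (n + 1)
      have h4 : Finset.Ioo 63 (n + 1) = Finset.Icc 64 n := by
        ext; simp only [Finset.mem_Ioo, Finset.mem_Icc]; omega
      rw [h4] at h3
      refine h3.trans (by norm_num)
    have : 0 ≤ 2 * (Y : ℝ) ^ 2 := by positivity
    nlinarith
  calc _ ≤ ∑ k ∈ Hset n ω l, (A k + D k + B k) := Finset.sum_le_sum hpt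
    _ ≤ ∑ k ∈ s, (A k + D k + B k) := Finset.sum_le_sum_of_subset_of_nonneg hsub
        fun k hk _ => add_nonneg (add_nonneg (hA0 k hk) (hD0 k)) (hB0 k hk)
    _ = ∑ k ∈ s, A k + ∑ k ∈ s, D k + ∑ k ∈ s, B k := by
        rw [Finset.sum_add_distrib, Finset.sum_add_distrib]
    _ ≤ _ := by gcongr

/-! ### Passing to measures -/

lemma evWeight_true_pos (n : ℕ) (β : ℝ) : 0 < evWeight n β (fun _ => True) := by
  simp only [evWeight, if_true]
  exact Finset.sum_pos (fun σ _ => mallowsWeight_pos n β σ) ⟨1, Finset.mem_univ _⟩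

lemma mallowsMeasure_apply (n : ℕ) (β : ℝ) (P : Equiv.Perm (Fin n) → Prop) :
    mallowsMeasure n β {σ | P σ} =
      ENNReal.ofReal (evWeight n β P / evWeight n β (fun _ => True)) := by
  have hZ := evWeight_true_pos n β
  have hZ' : evWeight n β (fun _ => True) = ∑ τ, mallowsWeight n β τ := by simp [evWeight]
  unfold mallowsMeasure
  rw [Measure.finsetSum_apply]
  have h1 : ∀ σ : Equiv.Perm (Fin n),
      (ENNReal.ofReal (mallowsProb n β σ) • Measure.dirac σ) {σ | P σ} =
      ENNReal.ofReal ((if P σ then mallowsWeight n β σ else 0) /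
        evWeight n β (fun _ => True)) := by
    intro σ
    have hm : MeasurableSet {σ : Equiv.Perm (Fin n) | P σ} := trivial
    rw [Measure.smul_apply, Measure.dirac_apply' _ hm, smul_eq_mul, mallowsProb, hZ']
    by_cases hP : P σ
    · simp [hP]
    · simp [hP]
  simp only [h1]
  rw [← ENNReal.ofReal_sum_of_nonneg, ← Finset.sum_div]
  · rfl
  · intro σ _
    refine div_nonneg ?_ hZ.le
    split_ifs
    · exact (mallowsWeight_pos n β σ).le
    · exact le_rfl

/-- There are absolute constants `C, C', c > 0` such that for all `n ≥ 1`,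
`0 < β ≤ 1`, and `l ∈ [n]`:
`P(∑_{j ∈ H_l} (l - j) > C' β⁻²) ≤ C exp(-c β^{-1/16})`.
(The sum `∑_{j ∈ H_l} (l - j)` is invariant under the common index shift.) -/
theorem statement12 :
    ∃ C C' c : ℝ, 0 < C ∧ 0 < C' ∧ 0 < c ∧
      ∀ n : ℕ, 0 < n → ∀ β : ℝ, 0 < β → β ≤ 1 → ∀ l : Fin n,
        hitRunMeasure n β
            {ω | C' * (β ^ 2)⁻¹ <
              ∑ j ∈ Hset n ω l, (((l : ℕ) : ℝ) - ((j : ℕ) : ℝ))}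
          ≤ ENNReal.ofReal (C * Real.exp (-c * β ^ (-(1 : ℝ) / 16))) := by
  refine ⟨11, 4 * (64 ^ 8 + 2) + 80, 1 / 4, by norm_num, by norm_num, by norm_num, ?_⟩
  intro n _ β hβ hβ1 l
  obtain ⟨hθ1, -, hθβ⟩ := rpow_bounds hβ hβ1
  have h1β : 1 ≤ 1 / β := by rw [le_div_iff₀ hβ]; linarith
  set Y := ⌈1 / β⌉₊ with hYdef
  have hY : 1 / β ≤ Y := Nat.le_ceil _
  have hY1 : 1 ≤ Y := by
    have : (1 : ℝ) ≤ Y := h1β.trans hY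
    exact_mod_cast this
  have hY2 : (Y : ℝ) ≤ 2 * (1 / β) := by
    have := Nat.ceil_lt_add_one (show 0 ≤ 1 / β by linarith)
    rw [← hYdef] at this
    linarith
  have hYsq : (Y : ℝ) ^ 2 ≤ 4 * (β ^ 2)⁻¹ := by
    calc (Y : ℝ) ^ 2 ≤ (2 * (1 / β)) ^ 2 := by gcongr
      _ = _ := by rw [mul_pow, one_div, inv_pow]; norm_num
  set A : Set (Fin n → ℝ) := {e | 80 * (β ^ 2)⁻¹ < ∑ k ∈ Finset.univ.filter (fun k => k < l),
        if (((l : ℕ) : ℝ) - (k : ℕ)) / 8 < e k then ((l : ℕ) : ℝ) - (k : ℕ) else 0} with hA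
  have hsub : {ω : Equiv.Perm (Fin n) × (Fin n → ℝ) | (4 * (64 ^ 8 + 2) + 80) * (β ^ 2)⁻¹ <
      ∑ j ∈ Hset n ω l, (((l : ℕ) : ℝ) - ((j : ℕ) : ℝ))} ⊆
      ({σ | BadPerm n l Y σ} ×ˢ Set.univ) ∪ (Set.univ ×ˢ A) := by
    intro ω hω
    by_cases hbad : BadPerm n l Y ω.1
    · exact Or.inl ⟨hbad, trivial⟩
    refine Or.inr ⟨trivial, ?_⟩
    have h := sum_Hset_le l Y hY1 ω hbad
    simp only [Set.mem_ofPred_eq] at hω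
    rw [hA, Set.mem_ofPred_eq]
    have h2 := hω.trans_le h
    nlinarith
  have h2β : 0 < 2 * β := by linarith
  have : IsProbabilityMeasure (ProbabilityTheory.expMeasure (2 * β)) :=
    ProbabilityTheory.isProbabilityMeasure_expMeasure h2β
  have huniv : mallowsMeasure n β Set.univ = 1 := by
    have := mallowsMeasure_apply n β (fun _ => True)
    rw [div_self (evWeight_true_pos n β).ne', ENNReal.ofReal_one] at this
    simpa using this
  have hbad : mallowsMeasure n β {σ | BadPerm n l Y σ} ≤
      ENNReal.ofReal (10 * Real.exp (-(1 / 4) * β ^ (-(1 : ℝ) / 16))) := by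
    rw [mallowsMeasure_apply]
    refine ENNReal.ofReal_le_ofReal ?_
    rw [div_le_iff₀ (evWeight_true_pos n β)]
    exact badPerm_tail hβ hβ1 l Y hY
  have hclock : (Measure.pi fun _ : Fin n => ProbabilityTheory.expMeasure (2 * β)) A ≤
      ENNReal.ofReal (Real.exp (-(1 / 4) * β ^ (-(1 : ℝ) / 16))) := by
    refine (clocks_tail hβ hβ1 l).trans
      (ENNReal.ofReal_le_ofReal (Real.exp_le_exp.mpr ?_))
    linarith
  refine (measure_mono hsub).trans ((measure_union_le _ _).trans ?_)
  unfold hitRunMeasure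
  rw [Measure.prod_prod, Measure.prod_prod, huniv, measure_univ, mul_one, one_mul]
  refine (add_le_add hbad hclock).trans ?_
  rw [← ENNReal.ofReal_add (by positivity) (Real.exp_pos _).le]
  exact ENNReal.ofReal_le_ofReal (by linarith)
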